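/- arXiv:1106.2762 — 4 statements merged into one kernel-verified Lean document; each statement's English description precedes it below -/
import Mathlib

section
/- Let R be a graded Cohen-Macaulay domain of Krull dimension n, finitely generated over a field in positive degrees, with Hilbert series ∑ a(d) t^d. Then there exists a constant c > 0 and a positive integer ℓ such that along an arithmetic progression of degrees d with common difference at most ℓ, one has a(d)/d^{n-1} ≥ c for all sufficiently large d in the progression; in particular limsup_d a(d)/d^{n-1} > 0. -/
open Filter

variable (k R : Type) [Field k] [CommRing R] [IsDomain R] [Algebra k R]

/-- A graded `k`-algebra is *Cohen–Macaulay* iff it is a free module over a homogeneous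
system of parameters (a homogeneous Noether normalization). -/
def IsGradedCohenMacaulay (𝒜 : ℕ → Submodule k R) : Prop :=
  ∃ (m : ℕ) (s : Fin m → R),
    (∀ i, ∃ d : ℕ, 0 < d ∧ s i ∈ 𝒜 d) ∧
    ringKrullDim ↥(Algebra.adjoin k (Set.range s)) = ringKrullDim R ∧
    Module.Free ↥(Algebra.adjoin k (Set.range s)) R


theorem gh_ringKrullDim_eq_of_isIntegral (A B : Type*) [CommRing A] [CommRing B] [Algebra A B]
    [Algebra.IsIntegral A B] (hinj : Function.Injective (algebraMap A B)) :
    ringKrullDim A = ringKrullDim B := by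
  have : FaithfulSMul A B := (faithfulSMul_iff_algebraMap_injective A B).mpr hinj
  apply le_antisymm
  · refine iSup_le fun l => ?_
    obtain ⟨P, hP⟩ := Algebra.IsIntegral.comap_surjective A B l.head
    have : P.asIdeal.LiesOver (RelSeries.head l).asIdeal := ⟨by rw [← hP]; rfl⟩
    obtain ⟨L, hL, -⟩ := Ideal.exists_ltSeries_of_hasGoingUp l P.asIdeal
    rw [← hL]
    exact Order.LTSeries.length_le_krullDim L
  · exact Order.krullDim_le_of_strictMono (PrimeSpectrum.comap (algebraMap A B))
      (fun P Q h => Ideal.IsIntegral.comap_lt_comap (R := A) h)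

theorem gh_noether (F A : Type*) [Field F] [CommRing A] [IsDomain A] [Algebra F A]
    [Algebra.FiniteType F A] (n : ℕ) (hdim : ringKrullDim A = (n : WithBot (WithTop ℕ))) :
    ∃ g : MvPolynomial (Fin n) F →ₐ[F] A, Function.Injective g ∧ g.Finite := by
  obtain ⟨s, g, hg, hfin⟩ := exists_finite_inj_algHom_of_fg F A
  have : s = n := by
    let := g.toRingHom.toAlgebra
    have : Module.Finite (MvPolynomial (Fin s) F) A := hfin
    have h := gh_ringKrullDim_eq_of_isIntegral (MvPolynomial (Fin s) F) A hg
    rw [hdim, MvPolynomial.ringKrullDim_of_isNoetherianRing, ringKrullDim_eq_zero_of_field] at h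
    simp only [Nat.card_eq_fintype_card, Fintype.card_fin, zero_add] at h
    have h' : ((s : ℕ∞) : WithBot ℕ∞) = ((n : ℕ∞) : WithBot ℕ∞) := h
    exact_mod_cast h'
  subst this
  exact ⟨g, hg, hfin⟩

theorem gh_transc (F A : Type*) [Field F] [CommRing A] [IsDomain A] [Algebra F A]
    (n : ℕ) (g : MvPolynomial (Fin n) F →ₐ[F] A) (hg : Function.Injective g) (hfin : g.Finite) :
    IsTranscendenceBasis F (fun i => g (MvPolynomial.X i)) := by
  have hg' : g = MvPolynomial.aeval (fun i => g (MvPolynomial.X i)) := by ext; simp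
  rw [isTranscendenceBasis_iff_algebraicIndependent_isAlgebraic]
  constructor
  · rw [algebraicIndependent_iff_injective_aeval, ← hg']; exact hg
  · have hr : Algebra.adjoin F (Set.range fun i => g (MvPolynomial.X i)) = g.range := by
      rw [Algebra.adjoin_range_eq_range_aeval, ← hg']
    rw [hr]
    refine ⟨fun a => ?_⟩
    have : g.toRingHom.IsIntegralElem a := by
      let := g.toRingHom.toAlgebra
      have : Module.Finite (MvPolynomial (Fin n) F) A := hfin
      exact Algebra.IsIntegral.isIntegral (R := MvPolynomial (Fin n) F) a
    obtain ⟨p, hp, hp0⟩ := this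
    have : IsIntegral g.range a := by
      refine ⟨p.map g.rangeRestrict.toRingHom, hp.map _, ?_⟩
      rw [Polynomial.eval₂_map]
      exact hp0
    exact this.isAlgebraic

theorem gh_gens (F A : Type*) [Field F] [CommRing A] [Algebra F A]
    [Algebra.FiniteType F A] (𝒜 : ℕ → Submodule F A) [GradedAlgebra 𝒜]
    (h0 : 𝒜 0 = (1 : Submodule F A)) :
    ∃ S : Finset A, Algebra.adjoin F (S : Set A) = ⊤ ∧ ∀ x ∈ S, ∃ d, 0 < d ∧ x ∈ 𝒜 d := by
  classical
  obtain ⟨T, hT⟩ := Algebra.FiniteType.out (R := F) (A := A)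
  refine ⟨T.biUnion fun t => ((DirectSum.decompose 𝒜 t).support.filter (0 < ·)).image
    fun d => (DirectSum.decompose 𝒜 t d : A), ?_, ?_⟩
  · rw [← top_le_iff, ← hT, Algebra.adjoin_le_iff]
    intro t ht
    rw [← DirectSum.sum_support_decompose 𝒜 t]
    refine sum_mem fun d hd => ?_
    rcases Nat.eq_zero_or_pos d with rfl | hpos
    · have := h0.le (DirectSum.decompose 𝒜 t 0).2
      rw [Submodule.mem_one] at this
      obtain ⟨y, hy⟩ := this
      rw [← hy]
      exact Subalgebra.algebraMap_mem _ y
    · apply Algebra.subset_adjoin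
      simp only [Finset.coe_biUnion, Set.mem_iUnion, Finset.coe_image]
      exact ⟨t, ht, d, by simpa using ⟨by simpa using hd, hpos⟩, rfl⟩
  · intro x hx
    simp only [Finset.mem_biUnion, Finset.mem_image, Finset.mem_filter] at hx
    obtain ⟨t, -, d, ⟨-, hd⟩, rfl⟩ := hx
    exact ⟨d, hd, (DirectSum.decompose 𝒜 t d).2⟩

/-- homogeneous transcendence basis -/
theorem gh_hom_basis (F A : Type*) [Field F] [CommRing A] [IsDomain A] [Algebra F A]
    (𝒜 : ℕ → Submodule F A) (S : Finset A) (hS : Algebra.adjoin F (S : Set A) = ⊤)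
    (hSd : ∀ x ∈ S, ∃ d, 0 < d ∧ x ∈ 𝒜 d) (n : ℕ)
    (w : Fin n → A) (hw : IsTranscendenceBasis F w) :
    ∃ (y : Fin n → A) (e : Fin n → ℕ), AlgebraicIndependent F y ∧
      ∀ i, 0 < e i ∧ y i ∈ 𝒜 (e i) := by
  have : Algebra.IsAlgebraic (Algebra.adjoin F (S : Set A)) A := by
    refine ⟨fun a => ?_⟩
    have ha : a ∈ Algebra.adjoin F (S : Set A) := by rw [hS]; trivial
    exact isAlgebraic_algebraMap (⟨a, ha⟩ : Algebra.adjoin F (S : Set A))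
  obtain ⟨t, htS, ht⟩ := exists_isTranscendenceBasis_subset (R := F) (S : Set A)
  have hc := hw.lift_cardinalMk_eq ht
  obtain ⟨φ⟩ := Cardinal.lift_mk_eq'.mp hc
  have hy : AlgebraicIndependent F (fun i => (φ i : A)) := ht.1.comp φ φ.injective
  choose e he using fun i => hSd (φ i) (htS (φ i).2)
  exact ⟨_, e, hy, he⟩

/-- The span of products `g p * m i` with `p` of total degree at most `D`. -/
def ghW {F A : Type*} [Field F] [CommRing A] [Algebra F A] {n r : ℕ}
    (g : MvPolynomial (Fin n) F →ₐ[F] A) (m : Fin r → A) (D : ℕ) : Submodule F A :=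
  Submodule.span F {z | ∃ p i, p.totalDegree ≤ D ∧ z = g p * m i}

section
variable {F A : Type*} [Field F] [CommRing A] [Algebra F A] {n r : ℕ}
    (g : MvPolynomial (Fin n) F →ₐ[F] A) (m : Fin r → A)

theorem ghW_mono {D E : ℕ} (h : D ≤ E) : ghW g m D ≤ ghW g m E :=
  Submodule.span_mono fun _ ⟨p, i, hp, hz⟩ => ⟨p, i, hp.trans h, hz⟩

theorem ghW_mul_poly (p : MvPolynomial (Fin n) F) (D E : ℕ) (hp : p.totalDegree ≤ E)
    (z : A) (hz : z ∈ ghW g m D) : g p * z ∈ ghW g m (D + E) := by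
  induction hz using Submodule.span_induction with
  | mem x hx =>
    obtain ⟨q, i, hq, rfl⟩ := hx
    refine Submodule.subset_span ⟨p * q, i, ?_, by rw [map_mul, mul_assoc]⟩
    exact (MvPolynomial.totalDegree_mul _ _).trans (by omega)
  | zero => simp
  | add x y _ _ hx hy => rw [mul_add]; exact add_mem hx hy
  | smul c x _ hx => rw [mul_smul_comm]; exact Submodule.smul_mem _ _ hx

theorem ghW_mul_gen (s : A) (N D : ℕ) (hs : ∀ i, s * m i ∈ ghW g m N)
    (z : A) (hz : z ∈ ghW g m D) : s * z ∈ ghW g m (D + N) := by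
  induction hz using Submodule.span_induction with
  | mem x hx =>
    obtain ⟨q, i, hq, rfl⟩ := hx
    rw [mul_left_comm, add_comm]
    exact ghW_mul_poly g m q N D hq _ (hs i)
  | zero => simp
  | add x y _ _ hx hy => rw [mul_add]; exact add_mem hx hy
  | smul c x _ hx => rw [mul_smul_comm]; exact Submodule.smul_mem _ _ hx

/-- The finite spanning family. -/
noncomputable def ghFam (D : ℕ) (q : (Fin n → Fin (D + 1)) × Fin r) : A :=
  g (MvPolynomial.monomial (Finsupp.equivFunOnFinite.symm fun j => (q.1 j : ℕ)) 1) * m q.2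

theorem ghW_le (D : ℕ) : ghW g m D ≤ Submodule.span F (Set.range (ghFam g m D)) := by
  refine Submodule.span_le.mpr ?_
  rintro _ ⟨p, i, hp, rfl⟩
  have : g p * m i = ∑ v ∈ p.support, p.coeff v • (g (MvPolynomial.monomial v 1) * m i) := by
    conv_lhs => rw [p.as_sum]
    rw [map_sum, Finset.sum_mul]
    refine Finset.sum_congr rfl fun v _ => ?_
    rw [← smul_mul_assoc, ← map_smul, MvPolynomial.smul_monomial, smul_eq_mul, mul_one]
  rw [this]
  refine sum_mem fun v hv => Submodule.smul_mem _ _ (Submodule.subset_span ?_)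
  have hv' : ∀ j, v j < D + 1 := fun j => by
    have h1 : v j ≤ v.degree := Finsupp.le_degree j v
    have h2 := MvPolynomial.le_totalDegree hv
    have h3 : v.degree = v.sum fun _ e => e := rfl
    omega
  refine ⟨(fun j => ⟨v j, hv' j⟩, i), ?_⟩
  simp only [ghFam]
  congr 4
  ext j; simp

theorem ghW_finite (D : ℕ) : Module.Finite F (ghW g m D) := by
  have := FiniteDimensional.span_of_finite F (Set.finite_range (ghFam g m D))
  exact Submodule.finiteDimensional_of_le (ghW_le g m D)

theorem ghW_finrank (D : ℕ) : Module.finrank F (ghW g m D) ≤ (D + 1) ^ n * r := by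
  have := FiniteDimensional.span_of_finite F (Set.finite_range (ghFam g m D))
  refine (Submodule.finrank_mono (ghW_le g m D)).trans ?_
  refine (finrank_range_le_card _).trans ?_
  simp

theorem ghW_exists (hm : ∀ x, ∃ c : Fin r → MvPolynomial (Fin n) F, ∑ i, g (c i) * m i = x) (x : A) :
    ∃ N, x ∈ ghW g m N := by
  obtain ⟨c, rfl⟩ := hm x
  refine ⟨Finset.univ.sup fun i => (c i).totalDegree, sum_mem fun i _ => ?_⟩
  exact Submodule.subset_span ⟨c i, i,
    Finset.le_sup (f := fun i => (c i).totalDegree) (Finset.mem_univ i), rfl⟩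

theorem ghW_exists_fin {ι : Type*} (T : Finset ι) (f : ι → A)
    (hm : ∀ x, ∃ c : Fin r → MvPolynomial (Fin n) F, ∑ i, g (c i) * m i = x) :
    ∃ N, ∀ x ∈ T, f x ∈ ghW g m N := by
  choose N hN using fun x => ghW_exists g m hm (f x)
  exact ⟨T.sup N, fun x hx => ghW_mono g m (Finset.le_sup hx) (hN x)⟩

theorem gh_comp_mem (𝒜 : ℕ → Submodule F A) [GradedAlgebra 𝒜]
    (S : Finset A) (hS : Algebra.adjoin F (S : Set A) = ⊤)
    (hSd : ∀ x ∈ S, ∃ d, 0 < d ∧ x ∈ 𝒜 d) (N : ℕ) (h1 : (1 : A) ∈ ghW g m N)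
    (hN : ∀ s ∈ S, ∀ i, s * m i ∈ ghW g m N) (d : ℕ) : 𝒜 d ≤ ghW g m (N * (d + 1)) := by
  classical
  have key : ∀ a : A, ∀ x : A, (∀ d, (GradedAlgebra.proj 𝒜 d x) ∈ ghW g m (N * (d + 1))) →
      (∀ d, (GradedAlgebra.proj 𝒜 d (a * x)) ∈ ghW g m (N * (d + 1))) := by
    intro a
    have ha : a ∈ Algebra.adjoin F (S : Set A) := by rw [hS]; trivial
    induction ha using Algebra.adjoin_induction with
    | mem s hs =>
      intro x hx d
      obtain ⟨e, he, hse⟩ := hSd s hs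
      rw [GradedAlgebra.proj_apply]
      by_cases hed : e ≤ d
      · rw [DirectSum.coe_decompose_mul_of_left_mem_of_le 𝒜 hse hed]
        have h := ghW_mul_gen g m s N _ (hN s hs) _ (hx (d - e))
        refine ghW_mono g m ?_ h
        obtain ⟨f, rfl⟩ := Nat.exists_eq_add_of_le hed
        rw [Nat.add_sub_cancel_left]
        nlinarith
      · rw [DirectSum.coe_decompose_mul_of_left_mem_of_not_le 𝒜 hse hed]
        exact zero_mem _
    | algebraMap c =>
      intro x hx d
      rw [← Algebra.smul_def, map_smul]
      exact Submodule.smul_mem _ _ (hx d)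
    | add a b _ _ iha ihb =>
      intro x hx d
      rw [add_mul, map_add]
      exact add_mem (iha x hx d) (ihb x hx d)
    | mul a b _ _ iha ihb =>
      intro x hx
      rw [mul_assoc]
      exact iha _ (ihb x hx)
  intro a ha
  have := key a 1 (fun d => ?_) d
  · rwa [mul_one, GradedAlgebra.proj_apply, DirectSum.decompose_of_mem_same 𝒜 ha] at this
  · have h1m : (1 : A) ∈ 𝒜 0 := SetLike.one_mem_graded 𝒜
    rw [GradedAlgebra.proj_apply]
    by_cases hd : d = 0
    · subst hd
      rw [DirectSum.decompose_of_mem_same 𝒜 h1m]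
      simpa using h1
    · rw [DirectSum.decompose_of_mem_ne 𝒜 h1m (Ne.symm hd)]
      exact zero_mem _

theorem gh_upper_aux [IsDomain A] (𝒜 : ℕ → Submodule F A) [GradedAlgebra 𝒜]
    (N : ℕ) (hW : ∀ d, 𝒜 d ≤ ghW g m (N * (d + 1))) (x : A) (hx : x ≠ 0) (e : ℕ) (he : 0 < e)
    (hxe : x ∈ 𝒜 e) (d : ℕ) :
    (d + 1) * Module.finrank F (𝒜 d) ≤ (N * (d + d * e + 1) + 1) ^ n * r := by
  classical
  have hmem : ∀ (f : 𝒜 d) (j : ℕ), x ^ j * (f : A) ∈ 𝒜 (j * e + d) := fun f j => by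
    have := SetLike.pow_mem_graded j hxe
    rw [smul_eq_mul] at this
    exact SetLike.mul_mem_graded this f.2
  let φ : (Fin (d + 1) → 𝒜 d) →ₗ[F] A :=
    ∑ j : Fin (d + 1), (LinearMap.mulLeft F (x ^ (j : ℕ))) ∘ₗ (𝒜 d).subtype ∘ₗ LinearMap.proj j
  have hφ : ∀ f, φ f = ∑ j : Fin (d + 1), x ^ (j : ℕ) * (f j : A) := fun f => by simp [φ]
  have hφm : ∀ f, φ f ∈ ghW g m (N * (d + d * e + 1)) := fun f => by
    rw [hφ]
    refine sum_mem fun j _ => ghW_mono g m ?_ (hW _ (hmem (f j) j))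
    have : (j : ℕ) * e ≤ d * e := Nat.mul_le_mul_right _ (by omega)
    exact Nat.mul_le_mul_left _ (by omega)
  have hinj : Function.Injective φ := by
    rw [injective_iff_map_eq_zero]
    intro f hf
    ext j
    rw [hφ] at hf
    have h := congrArg (GradedAlgebra.proj 𝒜 ((j : ℕ) * e + d)) hf
    rw [map_zero, map_sum, Finset.sum_eq_single j] at h
    · rw [GradedAlgebra.proj_apply, DirectSum.decompose_of_mem_same 𝒜 (hmem (f j) j)] at h
      simpa [hx] using h
    · intro i _ hij
      rw [GradedAlgebra.proj_apply]
      refine DirectSum.decompose_of_mem_ne 𝒜 (hmem (f i) i) fun h => hij (Fin.ext ?_)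
      exact Nat.eq_of_mul_eq_mul_right he (by omega)
    · simp
  have := ghW_finite g m (N * (d + d * e + 1))
  have h := LinearMap.finrank_le_finrank_of_injective (f := φ.codRestrict _ hφm)
    (fun a b hab => hinj (by simpa using congrArg Subtype.val hab))
  have hfin : Module.Finite F (𝒜 d) := by
    have := ghW_finite g m (N * (d + 1))
    exact Submodule.finiteDimensional_of_le (hW d)
  rw [Module.finrank_pi_fintype] at h
  simp only [Finset.sum_const, Finset.card_univ, Fintype.card_fin, smul_eq_mul] at h
  exact h.trans (ghW_finrank g m _)

end

theorem gh_upper {F A : Type*} [Field F] [CommRing A] [IsDomain A] [Algebra F A] {n : ℕ}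
    (g : MvPolynomial (Fin (n + 1)) F →ₐ[F] A) (hfin : g.Finite)
    (𝒜 : ℕ → Submodule F A) [GradedAlgebra 𝒜]
    (S : Finset A) (hS : Algebra.adjoin F (S : Set A) = ⊤)
    (hSd : ∀ x ∈ S, ∃ d, 0 < d ∧ x ∈ 𝒜 d)
    (x : A) (hx : x ≠ 0) (e : ℕ) (he : 0 < e) (hxe : x ∈ 𝒜 e) :
    (∀ d, Module.Finite F (𝒜 d)) ∧
      ∃ C : ℕ, ∀ d, Module.finrank F (𝒜 d) ≤ C * (d + 1) ^ n := by
  classical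
  obtain ⟨r, m, hm⟩ : ∃ (r : ℕ) (m : Fin r → A),
      ∀ x, ∃ c : Fin r → MvPolynomial (Fin (n + 1)) F, ∑ i, g (c i) * m i = x := by
    let := g.toRingHom.toAlgebra
    have : Module.Finite (MvPolynomial (Fin (n + 1)) F) A := hfin
    obtain ⟨r, m, hm⟩ := Module.Finite.exists_fin (R := MvPolynomial (Fin (n + 1)) F) (M := A)
    refine ⟨r, m, fun x => ?_⟩
    have hx : x ∈ Submodule.span (MvPolynomial (Fin (n + 1)) F) (Set.range m) := by
      rw [hm]; trivial
    obtain ⟨c, hc⟩ := (Submodule.mem_span_range_iff_exists_fun _).mp hx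
    exact ⟨c, hc⟩
  obtain ⟨N₁, hN₁⟩ := ghW_exists g m hm 1
  obtain ⟨N₂, hN₂⟩ := ghW_exists_fin g m (S ×ˢ Finset.univ) (fun q => q.1 * m q.2) hm
  have hW := gh_comp_mem g m 𝒜 S hS hSd (max N₁ N₂) (ghW_mono g m (le_max_left _ _) hN₁)
    (fun s hs i => ghW_mono g m (le_max_right _ _) (hN₂ (s, i) (by simpa using hs)))
  refine ⟨fun d => ?_, ?_⟩
  · have := ghW_finite g m (max N₁ N₂ * (d + 1))
    exact Submodule.finiteDimensional_of_le (hW d)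
  · set N := max N₁ N₂
    refine ⟨(N * (1 + e) + 1) ^ (n + 1) * r, fun d => ?_⟩
    have h := gh_upper_aux g m 𝒜 N hW x hx e he hxe d
    have h2 : N * (d + d * e + 1) + 1 ≤ (N * (1 + e) + 1) * (d + 1) := by
      have : (N * (1 + e) + 1) * (d + 1) = N * (d + d * e + 1) + 1 + (N * e + d) := by ring
      omega
    have h3 := Nat.mul_le_mul_right r (Nat.pow_le_pow_left h2 (n + 1))
    refine Nat.le_of_mul_le_mul_left (h.trans (h3.trans (le_of_eq ?_))) (Nat.succ_pos d)
    rw [mul_pow, pow_succ (d + 1)]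
    ring

theorem gh_lower {F A : Type*} [Field F] [CommRing A] [Algebra F A] {n : ℕ}
    (𝒜 : ℕ → Submodule F A) [GradedAlgebra 𝒜] (y : Fin (n + 1) → A) (e : Fin (n + 1) → ℕ)
    (hy : AlgebraicIndependent F y) (hye : ∀ i, 0 < e i ∧ y i ∈ 𝒜 (e i))
    (hfin : ∀ d, Module.Finite F (𝒜 d)) (J : ℕ) :
    (J / (n + 1) + 1) ^ n ≤ Module.finrank F (𝒜 (J * ∏ i, e i)) := by
  classical
  set ℓ := ∏ i, e i with hℓ
  have hdiv : ∀ i, ℓ / e i * e i = ℓ := fun i =>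
    Nat.div_mul_cancel (Finset.dvd_prod_of_mem e (Finset.mem_univ i))
  have hℓpos : 0 < ℓ := Finset.prod_pos fun i _ => (hye i).1
  have hpos : ∀ i, 0 < ℓ / e i := fun i => by
    refine Nat.pos_of_ne_zero fun h => ?_
    have := hdiv i
    rw [h] at this
    omega
  set q := J / (n + 1) + 1 with hq
  let β : (Fin n → Fin q) → Fin (n + 1) → ℕ := fun f =>
    Fin.cons (J - ∑ j, (f j : ℕ)) (fun j => (f j : ℕ))
  have hβsum : ∀ f, ∑ i, β f i = J := fun f => by
    rw [Fin.sum_univ_succ]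
    simp only [β, Fin.cons_zero, Fin.cons_succ]
    have h1 : ∑ j, (f j : ℕ) ≤ ∑ _j : Fin n, J / (n + 1) :=
      Finset.sum_le_sum fun j _ => by have := (f j).2; omega
    have h2 : ∑ _j : Fin n, J / (n + 1) = n * (J / (n + 1)) := by simp
    have h3 : (n + 1) * (J / (n + 1)) ≤ J := Nat.mul_div_le J (n + 1)
    have h4 : n * (J / (n + 1)) ≤ (n + 1) * (J / (n + 1)) := Nat.mul_le_mul_right _ (by omega)
    omega
  let α : (Fin n → Fin q) → (Fin (n + 1) →₀ ℕ) := fun f =>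
    Finsupp.equivFunOnFinite.symm fun i => ℓ / e i * β f i
  have hα : Function.Injective α := fun f f' h => by
    funext j
    have h1 := DFunLike.congr_fun h j.succ
    simp only [α, β, Finsupp.equivFunOnFinite_symm_apply_apply, Fin.cons_succ] at h1
    exact Fin.ext (Nat.eq_of_mul_eq_mul_left (hpos _) h1)
  have hli : LinearIndependent F
      (fun f => MvPolynomial.aeval (R := F) y (MvPolynomial.monomial (α f) (1 : F))) := by
    have h1 := ((MvPolynomial.basisMonomials (Fin (n + 1)) F).linearIndependent.comp α hα).map'
      (MvPolynomial.aeval (R := F) y).toLinearMap (LinearMap.ker_eq_bot.mpr hy)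
    have h2 : (MvPolynomial.aeval (R := F) y).toLinearMap ∘
        (MvPolynomial.basisMonomials (Fin (n + 1)) F) ∘ α =
        fun f => MvPolynomial.aeval (R := F) y (MvPolynomial.monomial (α f) (1 : F)) := by
      funext f
      simp [MvPolynomial.coe_basisMonomials]
    rw [← h2]
    exact h1
  have hmem : ∀ f, MvPolynomial.aeval (R := F) y (MvPolynomial.monomial (α f) (1 : F)) ∈
      𝒜 (J * ℓ) := fun f => by
    rw [MvPolynomial.aeval_monomial, map_one, one_mul, Finsupp.prod_fintype _ _ (by simp)]
    have h1 := SetLike.prod_mem_graded 𝒜 (F := Finset.univ)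
      (fun i => α f i • e i) (fun i => y i ^ (α f i))
      (fun i _ => SetLike.pow_mem_graded _ (hye i).2)
    convert h1 using 2
    rw [← hβsum f, Finset.sum_mul]
    refine Finset.sum_congr rfl fun i _ => ?_
    simp only [α, Finsupp.equivFunOnFinite_symm_apply_apply, smul_eq_mul]
    rw [mul_right_comm, hdiv, mul_comm]
  have hli' : LinearIndependent F (fun f => (⟨_, hmem f⟩ : 𝒜 (J * ℓ))) :=
    LinearIndependent.of_comp (𝒜 (J * ℓ)).subtype hli
  have := hfin (J * ℓ)
  have h := hli'.fintype_card_le_finrank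
  simpa using h

theorem gh_final (a : ℕ → ℕ) (n ℓ C : ℕ) (hℓ : 0 < ℓ)
    (hlow : ∀ J, (J / (n + 1) + 1) ^ n ≤ a (J * ℓ)) (hup : ∀ d, a d ≤ C * (d + 1) ^ n) :
    ∃ c : ℝ, 0 < c ∧
      (∃ ℓ : ℕ, 1 ≤ ℓ ∧ ∃ d₀ : ℕ, 0 < d₀ ∧ ∀ j : ℕ,
        c ≤ (a (d₀ + j * ℓ) : ℝ) / ((d₀ + j * ℓ : ℕ) : ℝ) ^ n) ∧
      0 < limsup (fun d : ℕ => (a d : ℝ) / (d : ℝ) ^ n) atTop := by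
  have hℓ' : (0 : ℝ) < ℓ := by exact_mod_cast hℓ
  set c : ℝ := (1 / ((n + 1) * ℓ)) ^ n with hc
  have hcpos : 0 < c := by positivity
  have key : ∀ j : ℕ, c ≤ (a (ℓ + j * ℓ) : ℝ) / ((ℓ + j * ℓ : ℕ) : ℝ) ^ n := fun j => by
    have e1 : ℓ + j * ℓ = (j + 1) * ℓ := by ring
    rw [e1, le_div_iff₀ (by positivity), hc, ← mul_pow]
    have h1 : (((j + 1) / (n + 1) + 1 : ℕ) : ℝ) ^ n ≤ a ((j + 1) * ℓ) := by
      exact_mod_cast hlow (j + 1)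
    refine le_trans (pow_le_pow_left₀ (by positivity) ?_ n) h1
    have h2 : j + 1 ≤ ((j + 1) / (n + 1) + 1) * (n + 1) := by
      have := Nat.div_add_mod (j + 1) (n + 1)
      have h3 := Nat.mod_lt (j + 1) (Nat.succ_pos n)
      nlinarith
    have h2' : ((j : ℝ) + 1) ≤ (((j + 1) / (n + 1) + 1 : ℕ) : ℝ) * (n + 1) := by exact_mod_cast h2
    rw [one_div, inv_mul_le_iff₀ (by positivity)]
    push_cast at h2' ⊢
    nlinarith
  refine ⟨c, hcpos, ⟨ℓ, hℓ, ℓ, hℓ, key⟩, lt_of_lt_of_le hcpos ?_⟩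
  refine le_limsup_of_frequently_le ?_ ?_
  · rw [frequently_atTop]
    intro b
    refine ⟨ℓ + b * ℓ, ?_, key b⟩
    nlinarith
  · refine isBoundedUnder_of_eventually_le (a := (C : ℝ) * 2 ^ n) ?_
    filter_upwards [eventually_ge_atTop 1] with d hd
    have hd' : (1 : ℝ) ≤ d := by exact_mod_cast hd
    rw [div_le_iff₀ (by positivity), mul_assoc, ← mul_pow]
    have h1 : (a d : ℝ) ≤ C * ((d : ℝ) + 1) ^ n := by exact_mod_cast hup d
    refine h1.trans (mul_le_mul_of_nonneg_left ?_ (by positivity))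
    exact pow_le_pow_left₀ (by positivity) (by linarith) n

/-- Let `R = ⊕_{d≥0} R_d` be a graded Cohen–Macaulay domain of Krull dimension `n`,
finitely generated over the field `R_0 = k` in positive degrees, with Hilbert series
`∑ a(d) t^d` where `a(d) = dim_k R_d`.  Then there are `c > 0` and `ℓ ≥ 1` such that
along an arithmetic progression of degrees with common difference `ℓ` one has
`a(d)/d^{n-1} ≥ c`; in particular `limsup_d a(d)/d^{n-1} > 0`. -/
theorem graded_CM_domain_hilbert_growth (𝒜 : ℕ → Submodule k R) [GradedAlgebra 𝒜]
    (h0 : 𝒜 0 = (1 : Submodule k R)) (hfg : Algebra.FiniteType k R)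
    (hCM : IsGradedCohenMacaulay k R 𝒜)
    (n : ℕ) (hn : 1 ≤ n) (hdim : ringKrullDim R = (n : WithBot (WithTop ℕ))) :
    ∃ c : ℝ, 0 < c ∧
      (∃ ℓ : ℕ, 1 ≤ ℓ ∧ ∃ d₀ : ℕ, 0 < d₀ ∧ ∀ j : ℕ,
        c ≤ (Module.finrank k ↥(𝒜 (d₀ + j * ℓ)) : ℝ) / ((d₀ + j * ℓ : ℕ) : ℝ) ^ (n - 1)) ∧
      0 < limsup (fun d : ℕ => (Module.finrank k ↥(𝒜 d) : ℝ) / (d : ℝ) ^ (n - 1)) atTop := by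
  obtain ⟨n, rfl⟩ : ∃ m, n = m + 1 := ⟨n - 1, by omega⟩
  obtain ⟨g, hg, hgfin⟩ := gh_noether k R (n + 1) hdim
  obtain ⟨S, hS, hSd⟩ := gh_gens k R 𝒜 h0
  obtain ⟨y, e, hy, hye⟩ := gh_hom_basis k R 𝒜 S hS hSd (n + 1) _ (gh_transc k R (n + 1) g hg hgfin)
  obtain ⟨hfin, C, hC⟩ := gh_upper g hgfin 𝒜 S hS hSd (y 0) (hy.ne_zero 0) (e 0) (hye 0).1 (hye 0).2
  exact gh_final (fun d => Module.finrank k (𝒜 d)) n (∏ i, e i) C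
    (Finset.prod_pos fun i _ => (hye i).1) (gh_lower 𝒜 y e hy hye hfin) hC
end

section
/- Let T = k* act on k[x_1, ..., x_n, x_{-n}] by t·x_i = t^i x_i (and t·x_{-n} = t^{-n} x_{-n}). Identify Z/nZ with the group of n-th roots of unity in T. Then the evaluation map f(x_1,...,x_n,x_{-n}) ↦ f(x_1,...,x_n,1) restricts to a ring isomorphism from the T-invariants k[x_1,...,x_n,x_{-n}]^T onto the Z/nZ-invariants k[x_1,...,x_n]^{Z/nZ}. -/
open MvPolynomial

variable (k : Type) [Field k]

/-- The action of `t ∈ k* = 𝔾ₘ` on a polynomial ring in which the variable `x_i` has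
weight `w i`: the substitution `x_i ↦ t^{w i} x_i`. -/
noncomputable def torusAct {ι : Type} (w : ι → ℤ) (t : kˣ) :
    MvPolynomial ι k →ₐ[k] MvPolynomial ι k :=
  aeval (fun i => ((t ^ w i : kˣ) : k) • X i)

/-- The ring of invariants of the torus `k*` acting on a polynomial ring with the
variable `x_i` of weight `w i`. -/
noncomputable def torusInv {ι : Type} (w : ι → ℤ) : Subalgebra k (MvPolynomial ι k) where
  carrier := {p | ∀ t : kˣ, torusAct k w t p = p}
  mul_mem' := by intro a b ha hb t; rw [map_mul, ha t, hb t]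
  add_mem' := by intro a b ha hb t; rw [map_add, ha t, hb t]
  algebraMap_mem' := by intro r t; exact (torusAct k w t).commutes r

/-- The minimal cardinality of a (finite) generating set of a subalgebra. -/
noncomputable def minGens {R : Type} [CommRing R] [Algebra k R] (A : Subalgebra k R) : ℕ :=
  sInf {c : ℕ | ∃ S : Finset R, S.card = c ∧ Algebra.adjoin k (S : Set R) = A}

/-- The weight function for the variables `x_1, …, x_n, x_{-n}`: the variable `x_i`
(encoded `some i`) has weight `i + 1 ∈ {1, …, n}`, and `x_{-n}` (encoded `none`) has
weight `-n`. -/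
def wOpt (n : ℕ) : Option (Fin n) → ℤ :=
  fun o => Option.elim o (-(n : ℤ)) (fun i => (i : ℤ) + 1)

/-- The action of the generator of `ℤ/nℤ` (identified with the `n`-th roots of unity via
a primitive root `ζ`) on `k[x_1, …, x_n]`: `x_i ↦ ζ^i x_i`. -/
noncomputable def cyclicAct (n : ℕ) (ζ : k) : MvPolynomial (Fin n) k →ₐ[k] MvPolynomial (Fin n) k :=
  aeval (fun i => ζ ^ ((i : ℕ) + 1) • X i)

/-- The invariants of `ℤ/nℤ` acting on `k[x_1, …, x_n]` via `x_i ↦ ζ^i x_i`. -/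
noncomputable def cyclicInv (n : ℕ) (ζ : k) : Subalgebra k (MvPolynomial (Fin n) k) where
  carrier := {p | cyclicAct k n ζ p = p}
  mul_mem' := by
    intro a b ha hb
    show cyclicAct k n ζ (a * b) = a * b
    rw [map_mul, show cyclicAct k n ζ a = a from ha, show cyclicAct k n ζ b = b from hb]
  add_mem' := by
    intro a b ha hb
    show cyclicAct k n ζ (a + b) = a + b
    rw [map_add, show cyclicAct k n ζ a = a from ha, show cyclicAct k n ζ b = b from hb]
  algebraMap_mem' := by intro r; exact (cyclicAct k n ζ).commutes r

/-- The evaluation map `f(x_1, …, x_n, x_{-n}) ↦ f(x_1, …, x_n, 1)`. -/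
noncomputable def evalAtOne (n : ℕ) :
    MvPolynomial (Option (Fin n)) k →ₐ[k] MvPolynomial (Fin n) k :=
  aeval (fun o => Option.elim o 1 (fun i => X i))

section Helpers

lemma diag_monomial {ι : Type} (c : ι → k) (m : ι →₀ ℕ) (a : k) :
    aeval (fun i => c i • (X i : MvPolynomial ι k)) (monomial m a)
      = monomial m ((m.prod fun i e => c i ^ e) * a) := by
  rw [aeval_monomial]
  simp only [Finsupp.prod, smul_eq_C_mul, mul_pow, Finset.prod_mul_distrib, ← C_pow]
  rw [← map_prod, monomial_eq (s := m), C_mul, Finsupp.prod, algebraMap_eq]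
  ring

lemma diag_coeff {ι : Type} (c : ι → k) (m : ι →₀ ℕ) (p : MvPolynomial ι k) :
    coeff m (aeval (fun i => c i • (X i : MvPolynomial ι k)) p)
      = (m.prod fun i e => c i ^ e) * coeff m p := by
  classical
  induction p using MvPolynomial.induction_on' with
  | monomial u a =>
    rw [diag_monomial, coeff_monomial, coeff_monomial]
    split_ifs with h
    · rw [h]
    · simp
  | add p q hp hq => rw [map_add, coeff_add, hp, hq, coeff_add]; ring

/-- The weighted degree of an exponent. -/
def wdeg {n : ℕ} (m : Fin n →₀ ℕ) : ℕ := m.sum fun i e => ((i : ℕ) + 1) * e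

/-- The total torus weight of an exponent. -/
def tdeg {n : ℕ} (m : Option (Fin n) →₀ ℕ) : ℤ := m.sum fun i e => wOpt n i * e

lemma tdeg_eq {n : ℕ} (m : Option (Fin n) →₀ ℕ) :
    tdeg m = -(n : ℤ) * m none + (wdeg m.some : ℤ) := by
  unfold tdeg wdeg
  rw [Finsupp.sum_fintype _ _ (by simp), Finsupp.sum_fintype _ _ (by simp), Fintype.sum_option]
  simp [wOpt]

lemma torus_prod {n : ℕ} (m : Option (Fin n) →₀ ℕ) (t : kˣ) :
    (m.prod fun i e => ((t ^ wOpt n i : kˣ) : k) ^ e) = ((t ^ tdeg m : kˣ) : k) := by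
  unfold tdeg
  rw [Finsupp.prod_fintype _ _ (by simp), Finsupp.sum_fintype _ _ (by simp)]
  have : t ^ (∑ i, wOpt n i * (m i : ℤ)) = ∏ i, (t ^ wOpt n i) ^ (m i) := by
    simp_rw [← zpow_natCast, ← zpow_mul]
    generalize (Finset.univ : Finset (Option (Fin n))) = s
    classical
    induction s using Finset.induction_on with
    | empty => simp
    | insert a s ha ih => rw [Finset.sum_insert ha, Finset.prod_insert ha, zpow_add, ih]
  rw [this]
  push_cast
  rfl

lemma cyclic_prod {n : ℕ} (m : Fin n →₀ ℕ) (ζ : k) :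
    (m.prod fun i e => (ζ ^ ((i : ℕ) + 1)) ^ e) = ζ ^ wdeg m := by
  unfold wdeg
  rw [Finsupp.prod, Finsupp.sum, ← Finset.prod_pow_eq_pow_sum]
  simp_rw [pow_mul]

lemma exists_unit_zpow_ne [Infinite k] (N : ℤ) (hN : N ≠ 0) : ∃ t : kˣ, t ^ N ≠ 1 := by
  classical
  have key : ∀ M : ℕ, M ≠ 0 → ∃ t : kˣ, t ^ M ≠ 1 := by
    intro M hM
    obtain ⟨x, hx⟩ := Infinite.exists_notMem_finset
      ((Polynomial.X * (Polynomial.X ^ M - 1) : Polynomial k).roots.toFinset)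
    have hne : (Polynomial.X * (Polynomial.X ^ M - 1) : Polynomial k) ≠ 0 :=
      mul_ne_zero Polynomial.X_ne_zero (Polynomial.X_pow_sub_C_ne_zero (Nat.pos_of_ne_zero hM) 1)
    simp only [Multiset.mem_toFinset, Polynomial.mem_roots hne, Polynomial.IsRoot.def,
      Polynomial.eval_mul, Polynomial.eval_X, Polynomial.eval_sub, Polynomial.eval_pow,
      Polynomial.eval_one, mul_eq_zero, not_or, sub_eq_zero] at hx
    refine ⟨Units.mk0 x hx.1, fun h => hx.2 ?_⟩
    simpa using congrArg (fun u : kˣ => (u : k)) h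
  obtain ⟨t, ht⟩ := key N.natAbs (by omega)
  refine ⟨t, fun h => ht ?_⟩
  rcases Int.natAbs_eq N with h' | h'
  · rw [h'] at h; simpa using h
  · rw [h'] at h; simpa using h

lemma mem_torusInv_iff [Infinite k] {n : ℕ} (p : MvPolynomial (Option (Fin n)) k) :
    p ∈ torusInv k (wOpt n) ↔ ∀ m ∈ p.support, tdeg m = 0 := by
  have h0 : p ∈ torusInv k (wOpt n) ↔ ∀ t : kˣ, torusAct k (wOpt n) t p = p := Iff.rfl
  rw [h0]
  constructor
  · intro h m hm
    by_contra hN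
    obtain ⟨t, ht⟩ := exists_unit_zpow_ne k _ hN
    have h1 := congrArg (coeff m) (h t)
    rw [torusAct, diag_coeff, torus_prod] at h1
    have h2 := (mul_eq_right₀ (mem_support_iff.mp hm)).mp h1
    exact ht (Units.ext h2)
  · intro h t
    ext m
    rw [torusAct, diag_coeff, torus_prod]
    by_cases hm : m ∈ p.support
    · simp [h m hm]
    · rw [notMem_support_iff.mp hm, mul_zero]

lemma mem_cyclicInv_iff {n : ℕ} {ζ : k} (hζ : IsPrimitiveRoot ζ n)
    (p : MvPolynomial (Fin n) k) :
    p ∈ cyclicInv k n ζ ↔ ∀ m ∈ p.support, n ∣ wdeg m := by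
  have h0 : p ∈ cyclicInv k n ζ ↔ cyclicAct k n ζ p = p := Iff.rfl
  rw [h0]
  constructor
  · intro h m hm
    have h1 := congrArg (coeff m) h
    rw [cyclicAct, diag_coeff, cyclic_prod] at h1
    exact hζ.dvd_of_pow_eq_one _ ((mul_eq_right₀ (mem_support_iff.mp hm)).mp h1)
  · intro h
    ext m
    rw [cyclicAct, diag_coeff, cyclic_prod]
    by_cases hm : m ∈ p.support
    · rw [(hζ.pow_eq_one_iff_dvd _).mpr (h m hm), one_mul]
    · rw [notMem_support_iff.mp hm, mul_zero]

lemma evalAtOne_monomial {n : ℕ} (m : Option (Fin n) →₀ ℕ) (a : k) :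
    evalAtOne k n (monomial m a) = monomial m.some a := by
  rw [evalAtOne, aeval_monomial, monomial_eq, algebraMap_eq,
    Finsupp.prod_fintype _ _ (by simp), Finsupp.prod_fintype _ _ (by simp), Fintype.prod_option]
  simp

/-- Homogenize an exponent with the variable of weight `-n`. -/
noncomputable def liftExp {n : ℕ} (m : Fin n →₀ ℕ) : Option (Fin n) →₀ ℕ :=
  m.optionElim (wdeg m / n)

lemma liftExp_some_eq {n : ℕ} (hn : 1 ≤ n) (m : Option (Fin n) →₀ ℕ) (h : tdeg m = 0) :
    liftExp m.some = m := by
  rw [tdeg_eq] at h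
  have h2 : wdeg m.some = n * m none := by zify; linarith
  ext o
  cases o with
  | none => simp [liftExp, h2, Nat.mul_div_cancel_left _ hn]
  | some i => simp [liftExp]

lemma liftExp_some {n : ℕ} (m : Fin n →₀ ℕ) : (liftExp m).some = m := by
  ext i; simp [liftExp]

lemma tdeg_liftExp {n : ℕ} (m : Fin n →₀ ℕ) (h : n ∣ wdeg m) : tdeg (liftExp m) = 0 := by
  rw [tdeg_eq, liftExp_some]
  have : (liftExp m) none = wdeg m / n := by simp [liftExp]
  rw [this]
  have h2 := Nat.mul_div_cancel' h
  zify at h2 ⊢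
  linarith

/-- The homogenization map. -/
noncomputable def homog (n : ℕ) :
    MvPolynomial (Fin n) k →ₗ[k] MvPolynomial (Option (Fin n)) k :=
  (basisMonomials (Fin n) k).constr k fun m => monomial (liftExp m) 1

lemma homog_monomial {n : ℕ} (m : Fin n →₀ ℕ) (a : k) :
    homog k n (monomial m a) = monomial (liftExp m) a := by
  have : (monomial m a : MvPolynomial (Fin n) k) = a • basisMonomials (Fin n) k m := by
    simp [smul_monomial]
  rw [this, map_smul, homog, Module.Basis.constr_basis, smul_monomial]
  simp

lemma evalAtOne_homog {n : ℕ} (q : MvPolynomial (Fin n) k) :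
    evalAtOne k n (homog k n q) = q := by
  induction q using MvPolynomial.induction_on' with
  | monomial u a => rw [homog_monomial, evalAtOne_monomial, liftExp_some]
  | add p q hp hq => rw [map_add, map_add, hp, hq]

lemma homog_evalAtOne [Infinite k] {n : ℕ} (hn : 1 ≤ n) (p : MvPolynomial (Option (Fin n)) k)
    (hp : p ∈ torusInv k (wOpt n)) : homog k n (evalAtOne k n p) = p := by
  rw [mem_torusInv_iff] at hp
  conv_rhs => rw [p.as_sum]
  conv_lhs => rw [p.as_sum]
  rw [map_sum, map_sum]
  refine Finset.sum_congr rfl fun m hm => ?_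
  rw [evalAtOne_monomial, homog_monomial, liftExp_some_eq hn m (hp m hm)]

lemma evalAtOne_mem [Infinite k] {n : ℕ} {ζ : k} (hζ : IsPrimitiveRoot ζ n)
    (p : MvPolynomial (Option (Fin n)) k) (hp : p ∈ torusInv k (wOpt n)) :
    evalAtOne k n p ∈ cyclicInv k n ζ := by
  classical
  rw [mem_torusInv_iff] at hp
  rw [p.as_sum, map_sum]
  refine Subalgebra.sum_mem _ fun m hm => ?_
  rw [evalAtOne_monomial, mem_cyclicInv_iff k hζ]
  intro m' hm'
  rw [Finset.mem_singleton.mp (support_monomial_subset hm')]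
  have h := hp m hm
  rw [tdeg_eq] at h
  exact ⟨m none, by zify; linarith⟩

lemma homog_mem [Infinite k] {n : ℕ} {ζ : k} (hζ : IsPrimitiveRoot ζ n)
    (q : MvPolynomial (Fin n) k) (hq : q ∈ cyclicInv k n ζ) :
    homog k n q ∈ torusInv k (wOpt n) := by
  classical
  rw [mem_cyclicInv_iff k hζ] at hq
  rw [q.as_sum, map_sum]
  refine Subalgebra.sum_mem _ fun m hm => ?_
  rw [homog_monomial, mem_torusInv_iff]
  intro m' hm'
  rw [Finset.mem_singleton.mp (support_monomial_subset hm')]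
  exact tdeg_liftExp m (hq m hm)

end Helpers

/-- Let `T = k*` act on `k[x_1, …, x_n, x_{-n}]` by `t · x_i = t^i x_i` and identify
`ℤ/nℤ` with the `n`-th roots of unity in `T` via a primitive `n`-th root `ζ`.  Then the
evaluation `f(x_1,…,x_n,x_{-n}) ↦ f(x_1,…,x_n,1)` restricts to a ring isomorphism from
the `T`-invariants onto the `ℤ/nℤ`-invariants. -/
theorem evalAtOne_iso_torus_cyclic_invariants [IsAlgClosed k] (n : ℕ) (hn : 1 ≤ n)
    (ζ : k) (hζ : IsPrimitiveRoot ζ n) :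
    (∀ p ∈ torusInv k (wOpt n), evalAtOne k n p ∈ cyclicInv k n ζ) ∧
    ∃ φ : ↥(torusInv k (wOpt n)) ≃ₐ[k] ↥(cyclicInv k n ζ),
      ∀ p : ↥(torusInv k (wOpt n)),
        (φ p : MvPolynomial (Fin n) k) = evalAtOne k n (p : MvPolynomial (Option (Fin n)) k) := by
  have : Infinite k := IsAlgClosed.instInfinite
  refine ⟨fun p hp => evalAtOne_mem k hζ p hp, ?_⟩
  let f : ↥(torusInv k (wOpt n)) →ₐ[k] ↥(cyclicInv k n ζ) :=
    ((evalAtOne k n).comp (torusInv k (wOpt n)).val).codRestrict (cyclicInv k n ζ)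
      fun p => evalAtOne_mem k hζ p.1 p.2
  have hf : ∀ p, ((f p : ↥(cyclicInv k n ζ)) : MvPolynomial (Fin n) k) = evalAtOne k n p.1 :=
    fun p => rfl
  have hbij : Function.Bijective f := by
    constructor
    · intro p q h
      apply Subtype.ext
      rw [← homog_evalAtOne k hn p.1 p.2, ← homog_evalAtOne k hn q.1 q.2, ← hf p, ← hf q, h]
    · intro q
      refine ⟨⟨homog k n q.1, homog_mem k hζ q.1 q.2⟩, Subtype.ext ?_⟩
      rw [hf]
      exact evalAtOne_homog k q.1
  exact ⟨AlgEquiv.ofBijective f hbij, fun p => hf p⟩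
end

section
/- Olson's theorem: Every sequence of at least 3√n elements (with repetition allowed, but the paper's application uses distinct residues) of Z/nZ of distinct values, of cardinality at least 3√n, contains a nonempty subset summing to 0 in Z/nZ. Equivalently, if S ⊆ Z/nZ has |S| ≥ 3√n then some nonempty subset of S has zero sum. -/
/-- Number of elements of `B` moved out of `B` by translation by `x`. -/
def olsonLam {G : Type} [AddCommGroup G] [DecidableEq G] (B : Finset G) (x : G) : ℕ :=
  (B.filter (fun y => y + x ∉ B)).card

section Lam
open Finset
variable {G : Type} [AddCommGroup G] [DecidableEq G]

lemma olsonLam_add_card (B : Finset G) (x : G) :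
    olsonLam B x + (B.filter (fun y => y + x ∈ B)).card = B.card := by
  unfold olsonLam
  rw [add_comm]
  exact Finset.card_filter_add_card_filter_not (s := B) (fun y => y + x ∈ B)

lemma olsonLam_zero (B : Finset G) : olsonLam B 0 = 0 := by
  unfold olsonLam
  rw [Finset.card_eq_zero, Finset.filter_eq_empty_iff]
  intro y hy
  simpa using hy

lemma olsonLam_neg (B : Finset G) (x : G) : olsonLam B (-x) = olsonLam B x := by
  have h1 := olsonLam_add_card B x
  have h2 := olsonLam_add_card B (-x)
  have h3 : (B.filter (fun y => y + x ∈ B)).card = (B.filter (fun y => y + -x ∈ B)).card := by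
    refine Finset.card_bij (fun y _ => y + x) ?_ ?_ ?_
    · intro y hy
      simp only [mem_filter] at hy ⊢
      exact ⟨hy.2, by simpa using hy.1⟩
    · intro a _ b _ h
      simpa using h
    · intro z hz
      simp only [mem_filter] at hz
      exact ⟨z + -x, by simpa using ⟨hz.2, hz.1⟩, by simp⟩
  omega

lemma olsonLam_add_le (B : Finset G) (x z : G) :
    olsonLam B (x + z) ≤ olsonLam B x + olsonLam B z := by
  unfold olsonLam
  have h : B.filter (fun y => y + (x + z) ∉ B) ⊆
      B.filter (fun y => y + x ∉ B) ∪
        (B.filter (fun y => y + z ∉ B)).image (fun y => y - x) := by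
    intro y hy
    simp only [mem_filter, mem_union, mem_image] at hy ⊢
    by_cases h : y + x ∈ B
    · right
      refine ⟨y + x, ⟨h, ?_⟩, by abel⟩
      rw [add_assoc]; exact hy.2
    · left
      exact ⟨hy.1, h⟩
  exact (card_le_card h).trans ((card_union_le _ _).trans
    (Nat.add_le_add_left card_image_le _))

lemma olsonLam_compl [Fintype G] (B : Finset G) (x : G) : olsonLam Bᶜ x = olsonLam B x := by
  rw [← olsonLam_neg B x]
  unfold olsonLam
  refine Finset.card_bij (fun y _ => y + x) ?_ ?_ ?_
  · intro y hy
    simp only [mem_filter, mem_compl, not_not] at hy ⊢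
    exact ⟨hy.2, by simpa using hy.1⟩
  · intro a _ b _ h
    simpa using h
  · intro z hz
    simp only [mem_filter] at hz
    exact ⟨z + -x, by simpa using ⟨hz.2, hz.1⟩, by simp⟩

lemma olsonLam_sum (B X : Finset G) :
    B.card * X.card ≤ B.card * B.card + ∑ x ∈ X, olsonLam B x := by
  have h1 : ∑ x ∈ X, (olsonLam B x + (B.filter (fun y => y + x ∈ B)).card)
      = X.card * B.card := by
    rw [Finset.sum_congr rfl (fun x _ => olsonLam_add_card B x)]
    simp
  rw [Finset.sum_add_distrib] at h1
  have h2 : ∑ x ∈ X, (B.filter (fun y => y + x ∈ B)).card ≤ B.card * B.card := by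
    rw [← Finset.card_sigma, ← Finset.card_product]
    refine Finset.card_le_card_of_injOn (fun p => (p.2, p.2 + p.1)) ?_ ?_
    · rintro ⟨x, y⟩ h
      simp only [coe_sigma, Set.mem_sigma_iff, mem_coe, mem_filter] at h
      simp [h.2.1, h.2.2]
    · rintro ⟨x, y⟩ _ ⟨x', y'⟩ _ h
      simp only [Prod.mk.injEq] at h
      obtain ⟨h, h'⟩ := h
      subst h
      simp at h'
      subst h'
      rfl
  nlinarith

/-- Balls of the Cayley graph. -/
def olsonBall (A : Finset G) : ℕ → Finset G
  | 0 => {0}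
  | j + 1 => (olsonBall A j ×ˢ A).image (fun p => p.1 + p.2)

lemma mem_olsonBall_succ (A : Finset G) (j : ℕ) (x : G) :
    x ∈ olsonBall A (j + 1) ↔ ∃ y ∈ olsonBall A j, ∃ a ∈ A, y + a = x := by
  simp [olsonBall, and_assoc]

lemma olsonBall_mono (A : Finset G) (h0 : (0 : G) ∈ A) (j : ℕ) :
    olsonBall A j ⊆ olsonBall A (j + 1) := by
  intro x hx
  rw [mem_olsonBall_succ]
  exact ⟨x, hx, 0, h0, by simp⟩

lemma olsonBall_lam (A B : Finset G) (L : ℕ) (hA : ∀ a ∈ A, olsonLam B a ≤ L) (j : ℕ) :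
    ∀ x ∈ olsonBall A j, olsonLam B x ≤ j * L := by
  induction j with
  | zero => intro x hx; simp [olsonBall] at hx; subst hx; simp [olsonLam_zero]
  | succ j ih =>
    intro x hx
    rw [mem_olsonBall_succ] at hx
    obtain ⟨y, hy, a, ha, rfl⟩ := hx
    have := olsonLam_add_le B y a
    have := ih y hy
    have := hA a ha
    nlinarith

lemma olsonBall_zero_mem (A : Finset G) (h0 : (0 : G) ∈ A) (j : ℕ) :
    (0 : G) ∈ olsonBall A j := by
  induction j with
  | zero => simp [olsonBall]
  | succ j ih => exact olsonBall_mono A h0 j ih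

lemma olsonBall_stab (A : Finset G) (h0 : (0 : G) ∈ A) (hneg : ∀ a ∈ A, -a ∈ A)
    (hgen : AddSubgroup.closure (A : Set G) = ⊤) (j : ℕ)
    (h : olsonBall A (j + 1) ⊆ olsonBall A j) (x : G) : x ∈ olsonBall A j := by
  have key : ∀ g ∈ AddSubgroup.closure (A : Set G),
      ∀ y, y ∈ olsonBall A j ↔ y + g ∈ olsonBall A j := by
    intro g hg
    induction hg using AddSubgroup.closure_induction with
    | mem g hg =>
      intro y
      constructor
      · intro hy
        exact h ((mem_olsonBall_succ A j _).2 ⟨y, hy, g, hg, rfl⟩)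
      · intro hy
        exact h ((mem_olsonBall_succ A j _).2 ⟨y + g, hy, -g, hneg g hg, by simp⟩)
    | zero => simp
    | add a b _ _ ha hb => intro y; rw [ha y, hb (y + a), add_assoc]
    | neg a _ ha => intro y; rw [ha (y + -a)]; simp
  have := key x (by rw [hgen]; trivial) 0
  rw [zero_add] at this
  exact this.1 (olsonBall_zero_mem A h0 j)

lemma olson_packing [Fintype G] (A B : Finset G) (L : ℕ) (h0 : (0 : G) ∈ A)
    (hneg : ∀ a ∈ A, -a ∈ A)
    (hgen : AddSubgroup.closure (A : Set G) = ⊤) (hA : ∀ a ∈ A, olsonLam B a ≤ L) (i : ℕ) :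
    (∃ X ⊆ olsonBall A (3 * i + 1), X.card = (i + 1) * A.card ∧
      2 * ∑ x ∈ X, olsonLam B x ≤ A.card * L * ((i + 1) * (3 * i + 2))) ∨
    (∃ m < i, ∃ X : Finset G, X.card = (m + 1) * A.card ∧
      2 * ∑ x ∈ X, olsonLam B x ≤ A.card * L * ((m + 1) * (3 * m + 2)) ∧
      ∀ x, olsonLam B x ≤ (3 * m + 2) * L) := by
  induction i with
  | zero =>
    left
    refine ⟨A, ?_, by simp, ?_⟩
    · intro x hx
      rw [mem_olsonBall_succ]
      exact ⟨0, olsonBall_zero_mem A h0 _, x, hx, by simp⟩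
    · have := Finset.sum_le_card_nsmul A _ L hA
      simp only [smul_eq_mul] at this
      nlinarith
  | succ i ih =>
    rcases ih with ⟨X, hX, hc, hs⟩ | ⟨m, hm, h⟩
    swap
    · right; exact ⟨m, by omega, h⟩
    by_cases hfull : olsonBall A (3 * i + 2 + 1) ⊆ olsonBall A (3 * i + 2)
    · right
      refine ⟨i, by omega, X, hc, hs, fun x => ?_⟩
      exact olsonBall_lam A B L hA _ x (olsonBall_stab A h0 hneg hgen _ hfull x)
    · left
      rw [Finset.not_subset] at hfull
      obtain ⟨z, hz, hz'⟩ := hfull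
      have hd : Disjoint X (A.image (fun a => z + a)) := by
        rw [Finset.disjoint_left]
        intro x hx hx'
        rw [mem_image] at hx'
        obtain ⟨a, ha, rfl⟩ := hx'
        apply hz'
        rw [mem_olsonBall_succ]
        exact ⟨z + a, hX hx, -a, hneg a ha, by simp⟩
      have hinj : Function.Injective (fun a : G => z + a) := add_right_injective z
      refine ⟨X ∪ A.image (fun a => z + a), ?_, ?_, ?_⟩
      · apply Finset.union_subset
        · refine hX.trans ?_
          refine (olsonBall_mono A h0 _).trans ?_
          refine (olsonBall_mono A h0 _).trans ?_
          exact olsonBall_mono A h0 _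
        · intro x hx
          rw [mem_image] at hx
          obtain ⟨a, ha, rfl⟩ := hx
          exact (mem_olsonBall_succ A _ _).2 ⟨z, hz, a, ha, rfl⟩
      · rw [card_union_of_disjoint hd, card_image_of_injective _ hinj, hc]; ring
      · rw [sum_union hd]
        have h1 : ∑ x ∈ A.image (fun a => z + a), olsonLam B x ≤ A.card * ((3 * i + 4) * L) := by
          have := Finset.sum_le_card_nsmul (A.image (fun a => z + a)) (olsonLam B) ((3 * i + 4) * L) ?_
          · rwa [card_image_of_injective _ hinj, smul_eq_mul] at this
          · intro x hx
            rw [mem_image] at hx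
            obtain ⟨a, ha, rfl⟩ := hx
            exact olsonBall_lam A B L hA (3 * i + 4) _
              ((mem_olsonBall_succ A _ _).2 ⟨z, hz, a, ha, rfl⟩)
        calc _ = 2 * ∑ x ∈ X, olsonLam B x + 2 * ∑ x ∈ A.image (fun a => z + a), olsonLam B x := by ring
          _ ≤ A.card * L * ((i + 1) * (3 * i + 2)) + 2 * (A.card * ((3 * i + 4) * L)) := by gcongr
          _ = _ := by ring

lemma olson_arithA (b w L N : ℤ) (hw : 1 ≤ w) (hN : 1 ≤ N) (hL : 6 * L ≤ w)
    (h1 : (2 * N - 1) * w ≤ 4 * b) (h2 : 4 * b ≤ (2 * N + 1) * w)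
    (h : 2 * (b * (N * w - b)) ≤ w * L * (N * (3 * N - 1))) : False := by
  have hd : 0 ≤ (4 * b - (2 * N - 1) * w) * ((2 * N + 1) * w - 4 * b) :=
    mul_nonneg (by linarith) (by linarith)
  have hp : 0 < N * (3 * N - 1) := by nlinarith
  have h3 : w * (N * (3 * N - 1)) * (6 * L) ≤ w * (N * (3 * N - 1)) * w :=
    mul_le_mul_of_nonneg_left hL (by positivity)
  have h5 : 0 < w * (N * (3 * N - 1)) := by positivity
  have h4 : 0 ≤ (w * w) * (N - 1) := mul_nonneg (by positivity) (by linarith)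
  nlinarith [mul_pos (show (0:ℤ) < w by linarith) (show (0:ℤ) < w by linarith)]

lemma olson_arithB (b w L M n : ℤ) (hw : 1 ≤ w) (hM : 1 ≤ M) (hL : 6 * L ≤ w)
    (h1 : (2 * M + 1) * w ≤ 4 * b) (hn : 2 * b ≤ n)
    (h : 2 * (b * (n - b)) ≤ (3 * M - 1) * L * (2 * n - M * w)) : False := by
  obtain ⟨r, hr⟩ : ∃ r, n = 2 * b + r := ⟨n - 2 * b, by ring⟩
  have hr0 : 0 ≤ r := by linarith
  subst hr
  have hMw : 0 < M * w := by positivity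
  have h2 : 0 ≤ (3 * M - 1) * (2 * (2 * b + r) - M * w) := by
    apply mul_nonneg <;> nlinarith
  have h3 := mul_le_mul_of_nonneg_left hL h2
  have h4 : 12 * (b * (b + r)) ≤ (3 * M - 1) * w * (4 * b + 2 * r - M * w) := by nlinarith
  have h5 : 0 ≤ r * (12 * b - 2 * (3 * M - 1) * w) := mul_nonneg hr0 (by nlinarith)
  have h6 : 0 < (3 * M - 1) * (w * w) := by
    apply mul_pos <;> nlinarith
  nlinarith [sq_nonneg (12 * b - 2 * (3 * M - 1) * w)]

/-- The generating lemma. -/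
lemma olson_generating [Fintype G] (U B : Finset G) (hU0 : (0 : G) ∉ U)
    (hUneg : (U ∩ U.image (fun x => -x)).card ≤ 1) (hgen : AddSubgroup.closure (U : Set G) = ⊤)
    (hB : 1 ≤ B.card) (hB2 : 2 * B.card ≤ Fintype.card G) :
    ∃ x ∈ U, B.card + 1 ≤ 2 * olsonLam B x ∨ U.card + 1 ≤ 3 * olsonLam B x := by
  by_contra hcon
  push Not at hcon
  set b := B.card with hb
  set u := U.card with hu
  obtain ⟨L, hLb, hLu, hL⟩ : ∃ L, 2 * L ≤ b ∧ 3 * L ≤ u ∧ ∀ x ∈ U, olsonLam B x ≤ L := by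
    refine ⟨min (b / 2) (u / 3), by omega, by omega, fun x hx => ?_⟩
    have := hcon x hx
    omega
  let A : Finset G := insert 0 (U ∪ U.image (fun x => -x))
  have hAc1 : (U ∪ U.image (fun x => -x)).card + 1 = A.card := by
    rw [card_insert_of_notMem (by simp [hU0])]
  have hAc : 2 * u ≤ A.card := by
    have h1 := card_union_add_card_inter U (U.image (fun x => -x))
    rw [card_image_of_injective _ neg_injective] at h1
    omega
  have h0 : (0 : G) ∈ A := mem_insert_self _ _
  have hAneg : ∀ a ∈ A, -a ∈ A := by
    intro a ha
    simp only [A, mem_insert, mem_union, mem_image] at ha ⊢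
    rcases ha with rfl | ha | ⟨y, hy, rfl⟩
    · simp
    · right; right; exact ⟨a, ha, rfl⟩
    · right; left; simpa using hy
  have hAL : ∀ a ∈ A, olsonLam B a ≤ L := by
    intro a ha
    simp only [A, mem_insert, mem_union, mem_image] at ha
    rcases ha with rfl | ha | ⟨y, hy, rfl⟩
    · simp [olsonLam_zero]
    · exact hL a ha
    · rw [olsonLam_neg]; exact hL y hy
  have hAgen : AddSubgroup.closure (A : Set G) = ⊤ := by
    rw [eq_top_iff, ← hgen]
    apply AddSubgroup.closure_mono
    intro x hx
    have hx' : x ∈ U := hx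
    show x ∈ A
    simp [A, hx']
  set w := A.card with hw
  -- first: 2 b ≥ w + 1
  have hbw : w + 1 ≤ 2 * b := by
    have h1 := olsonLam_sum B A
    have h2 : ∑ x ∈ A, olsonLam B x ≤ (w - 1) * L := by
      rw [sum_insert (by simp [hU0]), olsonLam_zero, zero_add]
      have := Finset.sum_le_card_nsmul (U ∪ U.image (fun x => -x)) (olsonLam B) L
        (fun x hx => hAL x (mem_insert_of_mem hx))
      have h3 : (U ∪ U.image (fun x => -x)).card = w - 1 := by omega
      rwa [h3, smul_eq_mul] at this
    rw [← hb, ← hw] at h1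
    obtain ⟨v, hv⟩ : ∃ v, w = v + 1 := ⟨w - 1, by omega⟩
    rw [hv, Nat.add_sub_cancel] at h2
    rw [hv] at h1 ⊢
    have h4 : 2 * (v * L) ≤ v * b := by nlinarith
    have h5 : b * (v + 2) ≤ b * (2 * b) := by nlinarith
    have := Nat.le_of_mul_le_mul_left h5 hB
    omega
  -- choose N
  obtain ⟨i, hi1, hi2⟩ : ∃ i : ℕ, (2 * i + 1) * w ≤ 4 * b ∧ 4 * b ≤ (2 * i + 3) * w := by
    have hwpos : 0 < 2 * w := by omega
    refine ⟨(4 * b - w) / (2 * w), ?_, ?_⟩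
    · have := Nat.div_mul_le_self (4 * b - w) (2 * w)
      have : (2 * ((4 * b - w) / (2 * w)) + 1) * w = (4 * b - w) / (2 * w) * (2 * w) + w := by ring
      omega
    · have := Nat.lt_div_mul_add (a := 4 * b - w) hwpos
      have : (2 * ((4 * b - w) / (2 * w)) + 3) * w
        = (4 * b - w) / (2 * w) * (2 * w) + 2 * w + w := by ring
      omega
  rcases olson_packing A B L h0 hAneg hAgen hAL i with ⟨X, -, hXc, hXs⟩ | ⟨m, hm, X, hXc, hXs, hall⟩
  · have h1 := olsonLam_sum B X
    rw [hXc, ← hb, ← hw] at h1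
    rw [← hw] at hXs
    apply olson_arithA b w L (i + 1) (by omega) (by omega) (by omega)
    · zify at hi1; linarith
    · zify at hi2; linarith
    · zify at h1 hXs; linarith
  · have h1 := olsonLam_sum B (univ : Finset G)
    rw [← hb, card_univ] at h1
    have h2 : ∑ x, olsonLam B x = ∑ x ∈ X, olsonLam B x + ∑ x ∈ Xᶜ, olsonLam B x :=
      (sum_add_sum_compl X _).symm
    have h3 : ∑ x ∈ Xᶜ, olsonLam B x ≤ Xᶜ.card * ((3 * m + 2) * L) := by
      have := Finset.sum_le_card_nsmul Xᶜ (olsonLam B) ((3 * m + 2) * L) (fun x _ => hall x)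
      simpa using this
    have h4 : X.card + Xᶜ.card = Fintype.card G := card_add_card_compl X
    rw [hXc, ← hw] at h4
    rw [← hw] at hXs
    generalize Xᶜ.card = c at h3 h4
    generalize Fintype.card G = n at h1 h4 hB2
    have hw1 : (1 : ℤ) ≤ w := by omega
    have hm1 : (1 : ℤ) ≤ m + 1 := by omega
    have hLw : 6 * (L : ℤ) ≤ w := by omega
    apply olson_arithB b w L (m + 1) n hw1 hm1 hLw
    · have : (2 * m + 3) * w ≤ (2 * i + 1) * w :=
        Nat.mul_le_mul_right w (by omega)
      zify at this hi1; linarith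
    · omega
    · zify at h1 hXs h2 h3 h4
      rw [h2] at h1
      have hc : (c : ℤ) = n - (m + 1) * w := by linarith
      rw [hc] at h3
      linarith

end Lam

section Sums
open Finset
variable {G : Type} [AddCommGroup G] [DecidableEq G]

/-- All subset sums (including the empty one). -/
def olsonSums (S : Finset G) : Finset G := S.powerset.image (fun T => ∑ a ∈ T, a)

/-- Zero-sum free sets. -/
def OlsonFree (S : Finset G) : Prop := ∀ T ⊆ S, T.Nonempty → ∑ a ∈ T, a ≠ 0

lemma mem_olsonSums (S : Finset G) (x : G) : x ∈ olsonSums S ↔ ∃ T ⊆ S, ∑ a ∈ T, a = x := by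
  simp [olsonSums]

lemma OlsonFree.mono {S T : Finset G} (h : OlsonFree S) (hT : T ⊆ S) : OlsonFree T :=
  fun R hR hn => h R (hR.trans hT) hn

lemma zero_mem_olsonSums (S : Finset G) : (0 : G) ∈ olsonSums S :=
  (mem_olsonSums S 0).2 ⟨∅, empty_subset _, by simp⟩

lemma olson_scherk (n : ℕ) : ∀ (A B : Finset G), B.card = n → (0 : G) ∈ A → (0 : G) ∈ B →
    (∀ a ∈ A, ∀ b ∈ B, a + b = 0 → b = 0) →
    A.card + B.card ≤ ((A ×ˢ B).image (fun p => p.1 + p.2)).card + 1 := by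
  induction n using Nat.strong_induction_on with
  | _ n ih =>
    intro A B hBn hA hB huniq
    by_cases hex : ∃ a ∈ A, ∃ b ∈ B, a + b ∉ A
    · obtain ⟨a, ha, b, hb, hab⟩ := hex
      set B2 := B.filter (fun b => a + b ∉ A) with hB2
      set B1 := B.filter (fun b => a + b ∈ A) with hB1
      have hcard : B1.card + B2.card = B.card :=
        Finset.card_filter_add_card_filter_not (s := B) (fun b => a + b ∈ A)
      have hB2pos : 0 < B2.card := card_pos.2 ⟨b, by simp [hB2, hb, hab]⟩
      set A' := A ∪ B2.image (fun b => a + b) with hA'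
      have hAcard : A'.card = A.card + B2.card := by
        rw [hA', card_union_of_disjoint, card_image_of_injective _ (add_right_injective a)]
        rw [disjoint_left]
        intro x hx hx'
        rw [mem_image] at hx'
        obtain ⟨y, hy, rfl⟩ := hx'
        exact (mem_filter.1 hy).2 hx
      have key := ih B1.card (by omega) A' B1 rfl (mem_union_left _ hA)
        (by simp [hB1, hB, ha]) ?_
      · have hsub : (A' ×ˢ B1).image (fun p => p.1 + p.2) ⊆
            (A ×ˢ B).image (fun p => p.1 + p.2) := by
          intro x hx
          simp only [mem_image, mem_product, Prod.exists] at hx ⊢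
          obtain ⟨c, d, ⟨hc, hd⟩, rfl⟩ := hx
          have hd' := mem_filter.1 hd
          rcases mem_union.1 hc with hc | hc
          · exact ⟨c, d, ⟨hc, hd'.1⟩, rfl⟩
          · obtain ⟨e, he, rfl⟩ := mem_image.1 hc
            exact ⟨a + d, e, ⟨hd'.2, (mem_filter.1 he).1⟩, by abel⟩
        have := card_le_card hsub
        omega
      · intro c hc d hd hcd
        have hd' := mem_filter.1 hd
        rcases mem_union.1 hc with hc | hc
        · exact huniq c hc d hd'.1 hcd
        · obtain ⟨e, he, rfl⟩ := mem_image.1 hc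
          have he' := mem_filter.1 he
          have : e = 0 := huniq (a + d) hd'.2 e he'.1 (by rw [← hcd]; abel)
          subst this
          exact absurd (by simpa using ha) he'.2
    · push Not at hex
      -- every b ∈ B is 0
      have hall : ∀ b ∈ B, b = 0 := by
        intro b hb
        have himg : A.image (fun a => a + b) = A := by
          apply eq_of_subset_of_card_le
          · intro x hx
            obtain ⟨a, ha, rfl⟩ := mem_image.1 hx
            exact hex a ha b hb
          · rw [card_image_of_injective _ (add_left_injective b)]
        have h0 : (0 : G) ∈ A.image (fun a => a + b) := by rw [himg]; exact hA
        obtain ⟨a, ha, hab⟩ := mem_image.1 h0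
        exact huniq a ha b hb hab
      have hB1 : B.card ≤ 1 := by
        rw [card_le_one]
        intro x hx y hy
        rw [hall x hx, hall y hy]
      have hsub : A ⊆ (A ×ˢ B).image (fun p => p.1 + p.2) := by
        intro a ha
        simp only [mem_image, mem_product, Prod.exists]
        exact ⟨a, 0, ⟨ha, hB⟩, by simp⟩
      have := card_le_card hsub
      omega

lemma olsonSums_super (S T U : Finset G) (hS : OlsonFree S) (hT : T ⊆ S) (hU : U ⊆ S)
    (hd : Disjoint T U) : (olsonSums T).card + (olsonSums U).card ≤ (olsonSums S).card + 1 := by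
  have h1 := olson_scherk _ (olsonSums T) (olsonSums U) rfl (zero_mem_olsonSums _)
    (zero_mem_olsonSums _) ?_
  · refine h1.trans (Nat.add_le_add_right (card_le_card ?_) 1)
    intro x hx
    simp only [mem_image, mem_product, Prod.exists, mem_olsonSums] at hx ⊢
    obtain ⟨a, b, ⟨⟨T', hT', rfl⟩, ⟨U', hU', rfl⟩⟩, rfl⟩ := hx
    refine ⟨T' ∪ U', union_subset (hT'.trans hT) (hU'.trans hU), ?_⟩
    rw [sum_union (disjoint_of_subset_left hT' (disjoint_of_subset_right hU' hd))]
  · intro a ha b hb hab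
    rw [mem_olsonSums] at ha hb
    obtain ⟨T', hT', rfl⟩ := ha
    obtain ⟨U', hU', rfl⟩ := hb
    rw [← sum_union (disjoint_of_subset_left hT' (disjoint_of_subset_right hU' hd))] at hab
    rcases U'.eq_empty_or_nonempty with rfl | hne
    · simp
    · exact absurd hab (hS _ (union_subset (hT'.trans hT) (hU'.trans hU))
        (hne.mono subset_union_right))

lemma olsonSums_insert (T : Finset G) (x : G) (hx : x ∉ T) :
    olsonSums (insert x T) = olsonSums T ∪ (olsonSums T).image (fun y => y + x) := by
  ext z
  simp only [mem_union, mem_image, mem_olsonSums]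
  constructor
  · rintro ⟨R, hR, rfl⟩
    by_cases hxR : x ∈ R
    · right
      refine ⟨∑ a ∈ R.erase x, a, ⟨R.erase x, ?_, rfl⟩, ?_⟩
      · intro y hy
        have := hR (mem_of_mem_erase hy)
        rcases mem_insert.1 this with h | h
        · exact absurd h (ne_of_mem_erase hy)
        · exact h
      · rw [sum_erase_add _ _ hxR]
    · left
      exact ⟨R, (subset_insert_iff_of_notMem hxR).1 hR, rfl⟩
  · rintro (⟨R, hR, rfl⟩ | ⟨y, ⟨R, hR, rfl⟩, rfl⟩)
    · exact ⟨R, hR.trans (subset_insert _ _), rfl⟩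
    · refine ⟨insert x R, insert_subset_insert _ hR, ?_⟩
      rw [sum_insert (fun h => hx (hR h)), add_comm]

lemma olsonSums_insert_card (T : Finset G) (x : G) (hx : x ∉ T) :
    (olsonSums (insert x T)).card = (olsonSums T).card + olsonLam (olsonSums T) x := by
  rw [olsonSums_insert T x hx]
  have : olsonSums T ∪ (olsonSums T).image (fun y => y + x) =
      olsonSums T ∪ ((olsonSums T).filter (fun y => y + x ∉ olsonSums T)).image (fun y => y + x) := by
    ext z
    simp only [mem_union, mem_image, mem_filter]
    constructor
    · rintro (h | ⟨y, hy, rfl⟩)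
      · exact Or.inl h
      · by_cases h : y + x ∈ olsonSums T
        · exact Or.inl h
        · exact Or.inr ⟨y, ⟨hy, h⟩, rfl⟩
    · rintro (h | ⟨y, hy, rfl⟩)
      · exact Or.inl h
      · exact Or.inr ⟨y, hy.1, rfl⟩
  rw [this, card_union_of_disjoint, card_image_of_injective _ (add_left_injective x)]
  · rfl
  · rw [disjoint_left]
    intro z hz hz'
    obtain ⟨y, hy, rfl⟩ := mem_image.1 hz'
    exact (mem_filter.1 hy).2 hz

/-- At most one involution. -/
def OlsonInv (G : Type) [AddCommGroup G] : Prop :=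
  ∀ x y : G, x ≠ 0 → y ≠ 0 → x + x = 0 → y + y = 0 → x = y

/-- One step of growth. -/
lemma olson_step [Fintype G] (hG : OlsonInv G) (S T : Finset G) (hS : OlsonFree S) (hT : T ⊆ S)
    (hne : (S \ T).Nonempty) (hgen : AddSubgroup.closure ((S \ T : Finset G) : Set G) = ⊤) :
    ∃ x ∈ S \ T, (olsonSums T).card + 1 ≤ 2 * olsonLam (olsonSums T) x ∨
      (S \ T).card + 1 ≤ 3 * olsonLam (olsonSums T) x := by
  have h0 : (0 : G) ∉ S \ T := by
    intro h
    exact hS {0} (by simpa using (mem_sdiff.1 h).1) (by simp) (by simp)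
  have hinv : ∀ x ∈ (S \ T) ∩ (S \ T).image (fun x => -x), x ≠ 0 ∧ x + x = 0 := by
    intro x hx
    obtain ⟨hx, hx'⟩ := mem_inter.1 hx
    obtain ⟨y, hy, rfl⟩ := mem_image.1 hx'
    refine ⟨fun h => h0 (h ▸ hx), ?_⟩
    by_contra hxx
    have hne : y ≠ -y := by
      intro h
      apply hxx
      nth_rewrite 1 [← h]
      simp
    refine hS {y, -y} ?_ (by simp) ?_
    · intro z hz
      rcases mem_insert.1 hz with rfl | hz
      · exact (mem_sdiff.1 hy).1
      · rw [mem_singleton.1 hz]; exact (mem_sdiff.1 hx).1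
    · rw [sum_pair hne]; simp
  have hneg : ((S \ T) ∩ (S \ T).image (fun x => -x)).card ≤ 1 := by
    rw [card_le_one]
    intro x hx y hy
    exact hG x y (hinv x hx).1 (hinv y hy).1 (hinv x hx).2 (hinv y hy).2
  by_cases hhalf : 2 * (olsonSums T).card ≤ Fintype.card G
  · exact olson_generating (S \ T) (olsonSums T) h0 hneg hgen
      (card_pos.2 ⟨0, zero_mem_olsonSums T⟩) hhalf
  · have hc : (olsonSums T).card + (olsonSums T)ᶜ.card = Fintype.card G := card_add_card_compl _
    have hle : (S \ T).card ≤ (olsonSums T)ᶜ.card := by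
      refine card_le_card_of_injOn (fun x => -x) ?_ (neg_injective.injOn)
      intro x hx
      have hx' := mem_sdiff.1 (mem_coe.1 hx)
      rw [mem_coe, mem_compl, mem_olsonSums]
      rintro ⟨R, hR, hsum⟩
      refine hS (insert x R) (insert_subset hx'.1 (hR.trans hT)) (by simp) ?_
      rw [sum_insert (fun h => hx'.2 (hR h)), hsum]
      simp
    have hpos := card_pos.2 hne
    obtain ⟨x, hx, h⟩ := olson_generating (S \ T) (olsonSums T)ᶜ h0 hneg hgen (by omega) (by omega)
    rw [olsonLam_compl] at h
    exact ⟨x, hx, by omega⟩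

/-- One step of the growth sequence (the case split forces evaluation of `b`). -/
def olsonNext (u b : ℕ) : ℕ :=
  match b with
  | 0 => min 1 ((u + 3) / 3)
  | c + 1 => c + 1 + min ((c + 3) / 2) ((u + 3) / 3)

lemma olsonNext_eq (u b : ℕ) : olsonNext u b = b + min ((b + 2) / 2) ((u + 3) / 3) := by
  cases b with
  | zero => simp [olsonNext]
  | succ c => rfl

/-- Growth sequence. -/
def olsonC (k : ℕ) : ℕ → ℕ
  | 0 => 1
  | t + 1 => olsonNext (k - t) (olsonC k t)

lemma olsonC_succ (k t : ℕ) :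
    olsonC k (t + 1) = olsonC k t + min ((olsonC k t + 2) / 2) ((k - t + 3) / 3) :=
  olsonNext_eq _ _

lemma olson_chain [Fintype G] (hG : OlsonInv G) (S : Finset G) (hS : OlsonFree S) (t : ℕ)
    (ht : t ≤ S.card) :
    (∃ T ⊆ S, T.card = t ∧ olsonC S.card t ≤ (olsonSums T).card) ∨
    (∃ U ⊆ S, S.card < U.card + t ∧ AddSubgroup.closure (U : Set G) ≠ ⊤) := by
  induction t with
  | zero =>
    left
    exact ⟨∅, empty_subset _, rfl, card_pos.2 ⟨0, zero_mem_olsonSums _⟩⟩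
  | succ t ih =>
    rcases ih (by omega) with ⟨T, hT, hTc, hb⟩ | ⟨U, hU, hUc, h⟩
    swap
    · right; exact ⟨U, hU, by omega, h⟩
    have hcard : (S \ T).card + T.card = S.card := card_sdiff_add_card_eq_card hT
    by_cases hgen : AddSubgroup.closure ((S \ T : Finset G) : Set G) = ⊤
    · left
      obtain ⟨x, hx, h⟩ := olson_step hG S T hS hT (card_pos.1 (by omega)) hgen
      have hx' := mem_sdiff.1 hx
      refine ⟨insert x T, insert_subset hx'.1 hT, ?_, ?_⟩
      · rw [card_insert_of_notMem hx'.2, hTc]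
      · rw [olsonSums_insert_card T x hx'.2]
        rw [olsonC_succ]
        omega
    · right
      exact ⟨S \ T, sdiff_subset, by omega, hgen⟩

lemma olsonC_mono (k t : ℕ) : olsonC k t ≤ olsonC k (t + 1) := by
  rw [olsonC_succ]; omega

lemma olsonC_geom (k t : ℕ) (ht : t ≤ k) :
    2 * 3 ^ t ≤ (olsonC k t + 1) * 2 ^ t ∨ 2 * (k - t) ≤ 3 * olsonC k t + 1 := by
  induction t with
  | zero => left; simp [olsonC]
  | succ t ih =>
    have hm := olsonC_mono k t
    rcases ih (by omega) with h | h
    · by_cases h2 : 2 * (k - t) ≤ 3 * olsonC k t + 1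
      · right; omega
      · left
        have h3 : 3 * (olsonC k t + 1) ≤ 2 * (olsonC k (t + 1) + 1) := by
          rw [olsonC_succ]; omega
        calc 2 * 3 ^ (t + 1) = 3 * (2 * 3 ^ t) := by ring
          _ ≤ 3 * ((olsonC k t + 1) * 2 ^ t) := by gcongr
          _ = 3 * (olsonC k t + 1) * 2 ^ t := by ring
          _ ≤ 2 * (olsonC k (t + 1) + 1) * 2 ^ t := by gcongr
          _ = _ := by ring
    · right; omega

lemma olson_pow (t : ℕ) (ht : 10 ≤ t) : (8 * t + 9) * 2 ^ t ≤ 2 * 3 ^ t := by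
  induction t, ht using Nat.le_induction with
  | base => norm_num
  | succ t ht ih =>
    have : 0 < 2 ^ t := by positivity
    rw [pow_succ, pow_succ]
    nlinarith

/-- In the linear regime, growth. -/
lemma olsonC_lin (k t0 : ℕ) (h0 : 2 * (k - t0) ≤ 3 * olsonC k t0 + 1) (s : ℕ)
    (hs : 3 * (t0 + s) ≤ k + 2) :
    3 * (9 * olsonC k t0 + (k - t0) ^ 2) + (2 * k + 12) * s ≤
      3 * (9 * olsonC k (t0 + s) + (k - (t0 + s)) ^ 2) ∧
      2 * (k - (t0 + s)) ≤ 3 * olsonC k (t0 + s) + 1 := by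
  induction s with
  | zero => simpa using h0
  | succ s ih =>
    obtain ⟨h1, h2⟩ := ih (by omega)
    obtain ⟨v, hv⟩ : ∃ v, k - (t0 + s) = v + 1 := ⟨k - (t0 + s) - 1, by omega⟩
    have hv' : k - (t0 + (s + 1)) = v := by omega
    have h3 : 3 * (v + 2) + 9 * olsonC k (t0 + s) ≤ 9 * olsonC k (t0 + (s + 1)) := by
      rw [← add_assoc]; rw [olsonC_succ]; omega
    have h4 : olsonC k (t0 + s) ≤ olsonC k (t0 + (s + 1)) := olsonC_mono k (t0 + s)
    have h5 : 2 * k ≤ 3 * (v + 1) := by omega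
    rw [hv] at h1 h2
    rw [hv']
    refine ⟨by nlinarith, by omega⟩

lemma olsonC_final_small : ∀ k < 120, k ^ 2 + 9 ≤ 9 * olsonC k (k - 2 * k / 3) + (2 * k / 3) ^ 2 := by
  decide +kernel

lemma olsonC_final (k : ℕ) :
    k ^ 2 + 9 ≤ 9 * olsonC k (k - 2 * k / 3) + (2 * k / 3) ^ 2 := by
  by_cases hk : k < 120
  · exact olsonC_final_small k hk
  push Not at hk
  obtain ⟨q, hq⟩ : ∃ q, q = k / 12 := ⟨_, rfl⟩
  have hgeom : 2 * (k - q) ≤ 3 * olsonC k q + 1 := by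
    rcases olsonC_geom k q (by omega) with h | h
    · have h1 := olson_pow q (by omega)
      have h2 : (8 * q + 9) * 2 ^ q ≤ (olsonC k q + 1) * 2 ^ q := h1.trans h
      have h3 := Nat.le_of_mul_le_mul_right h2 (by positivity)
      omega
    · exact h
  obtain ⟨s, hs⟩ : ∃ s, k - 2 * k / 3 = q + s := ⟨k - 2 * k / 3 - q, by omega⟩
  have h := (olsonC_lin k q hgeom s (by omega)).1
  have hu : k - (q + s) = 2 * k / 3 := by omega
  rw [hu] at h
  rw [hs]
  have hs3 : k ≤ 3 * (q + s) := by omega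
  have hkq : 12 * q ≤ k := by omega
  obtain ⟨d, hd⟩ : ∃ d, k = q + d := ⟨k - q, by omega⟩
  have hd' : k - q = d := by omega
  rw [hd'] at h hgeom
  generalize olsonC k (q + s) = C1 at *
  generalize olsonC k q = C0 at *
  generalize 2 * k / 3 = e at *
  have h6 : 3 * ((2 * k + 12) * (q + s)) ≥ (2 * k + 12) * k := by nlinarith
  zify at *
  have hdz : (d : ℤ) = k - q := by linarith
  rw [hdz] at h hgeom
  have h7 : (0 : ℤ) ≤ (k : ℤ) * (k - 12 * q) := mul_nonneg (by positivity) (by linarith)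
  have h8 := sq_nonneg (q : ℤ)
  nlinarith

lemma olson_gen_step [Fintype G] (hG : OlsonInv G) (S : Finset G) (hS : OlsonFree S)
    (hgen : AddSubgroup.closure (S : Set G) = ⊤)
    (ih : ∀ R ⊆ S, R.card < S.card → R.card ^ 2 + 9 ≤ 9 * (olsonSums R).card) :
    S.card ^ 2 + 9 ≤ 9 * (olsonSums S).card := by
  rcases Nat.eq_zero_or_pos S.card with hk0 | hkpos
  · have : 0 < (olsonSums S).card := card_pos.2 ⟨0, zero_mem_olsonSums _⟩
    rw [hk0]; omega
  rcases olson_chain hG S hS (S.card - 2 * S.card / 3) (by omega) with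
    ⟨T, hT, hTc, hb⟩ | ⟨U, hU, hUc, hUgen⟩
  · have hcard : (S \ T).card + T.card = S.card := card_sdiff_add_card_eq_card hT
    have hu : (S \ T).card = 2 * S.card / 3 := by omega
    have h1 := ih (S \ T) sdiff_subset (by omega)
    have h2 := olsonSums_super S T (S \ T) hS hT sdiff_subset disjoint_sdiff
    have h3 := olsonC_final S.card
    rw [hu] at h1
    omega
  · obtain ⟨x, hxS, hxU⟩ : ∃ x ∈ S, x ∉ AddSubgroup.closure (U : Set G) := by
      by_contra hcon
      push Not at hcon
      apply hUgen
      rw [eq_top_iff, ← hgen, AddSubgroup.closure_le]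
      intro x hx
      exact hcon x hx
    have hxU' : x ∉ U := fun h => hxU (AddSubgroup.subset_closure h)
    have hsub : insert x U ⊆ S := insert_subset hxS hU
    have hcard : (S \ insert x U).card + (insert x U).card = S.card :=
      card_sdiff_add_card_eq_card hsub
    rw [card_insert_of_notMem hxU'] at hcard
    have hmem : ∀ y ∈ olsonSums U, y ∈ AddSubgroup.closure (U : Set G) := by
      intro y hy
      obtain ⟨R, hR, rfl⟩ := (mem_olsonSums U y).1 hy
      exact AddSubgroup.sum_mem _ (fun a ha => AddSubgroup.subset_closure (hR ha))
    have hlam : olsonLam (olsonSums U) x = (olsonSums U).card := by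
      unfold olsonLam
      congr 1
      rw [filter_eq_self]
      intro y hy hyx
      apply hxU
      have := AddSubgroup.sub_mem _ (hmem _ hyx) (hmem _ hy)
      simpa using this
    have h1 := olsonSums_insert_card U x hxU'
    rw [hlam] at h1
    have h2 := olsonSums_super S (insert x U) (S \ insert x U) hS hsub sdiff_subset disjoint_sdiff
    have h3 := ih U hU (by omega)
    have h4 := ih (S \ insert x U) sdiff_subset (by omega)
    rw [h1] at h2
    have h5 : 2 * S.card + 1 ≤ 3 * U.card := by omega
    generalize (S \ insert x U).card = v at *
    generalize U.card = u at *
    rw [← hcard] at h5 ⊢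
    have h6 : 2 * v + 3 ≤ u := by omega
    nlinarith

end Sums

lemma olson_bound (k : ℕ) : ∀ (G : Type) [AddCommGroup G] [Fintype G] [DecidableEq G]
    (_ : OlsonInv G) (S : Finset G) (_ : OlsonFree S) (_ : S.card = k),
    S.card ^ 2 + 9 ≤ 9 * (olsonSums S).card := by
  induction k using Nat.strong_induction_on with
  | _ k ih =>
    intro G _ _ _ hG S hS hk
    classical
    let H := AddSubgroup.closure (S : Set G)
    let S' : Finset H := S.subtype (fun x => x ∈ H)
    have hmap : S'.map (Function.Embedding.subtype _) = S :=
      Finset.subtype_map_of_mem (fun x hx => AddSubgroup.subset_closure hx)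
    have hcard : S'.card = S.card := by
      conv_rhs => rw [← hmap]
      rw [Finset.card_map]
    have hsum : ∀ T : Finset H, ∑ a ∈ T.map (Function.Embedding.subtype _), a
        = ((∑ a ∈ T, a : H) : G) := by
      intro T
      rw [Finset.sum_map, AddSubgroup.val_finsetSum]
      rfl
    have hsubm : ∀ T ⊆ S', T.map (Function.Embedding.subtype _) ⊆ S := by
      intro T hT
      rw [← hmap]
      exact Finset.map_subset_map.2 hT
    have hfree : OlsonFree S' := by
      intro T hT hne h0
      refine hS _ (hsubm T hT) (hne.map) ?_
      rw [hsum, h0]; rfl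
    have hGH : OlsonInv H := by
      intro x y hx hy hxx hyy
      apply Subtype.ext
      apply hG
      · simpa using hx
      · simpa using hy
      · exact_mod_cast congrArg Subtype.val hxx
      · exact_mod_cast congrArg Subtype.val hyy
    have hgen : AddSubgroup.closure (S' : Set H) = ⊤ := by
      have : (S' : Set H) = ((↑) : H → G) ⁻¹' (S : Set G) := by
        ext x; simp [S']
      rw [this]
      exact AddSubgroup.closure_closure_coe_preimage
    have hmain := olson_gen_step hGH S' hfree hgen (fun R hR hRc =>
      ih R.card (by omega) H hGH R (hfree.mono hR) rfl)
    have hle : (olsonSums S').card ≤ (olsonSums S).card := by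
      refine Finset.card_le_card_of_injOn (fun x => (x : G)) ?_ (Subtype.val_injective.injOn)
      intro x hx
      obtain ⟨T, hT, rfl⟩ := (mem_olsonSums S' x).1 hx
      exact (mem_olsonSums S _).2 ⟨_, hsubm T hT, hsum T⟩
    rw [hcard] at hmain
    omega

lemma olsonInv_zmod (n : ℕ) [NeZero n] : OlsonInv (ZMod n) := by
  intro x y hx hy hxx hyy
  by_contra hne
  have h := IsAddCyclic.card_nsmul_eq_zero_le (α := ZMod n) (n := 2) (by norm_num)
  have hsub : ({0, x, y} : Finset (ZMod n)) ⊆ Finset.univ.filter (fun a : ZMod n => 2 • a = 0) := by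
    intro z hz
    simp only [Finset.mem_insert, Finset.mem_singleton] at hz
    simp only [Finset.mem_filter, Finset.mem_univ, true_and, two_nsmul]
    rcases hz with rfl | rfl | rfl
    · simp
    · exact hxx
    · exact hyy
  have h3 := Finset.card_le_card hsub
  rw [Finset.card_eq_three.2 ⟨0, x, y, hx.symm, hy.symm, hne, rfl⟩] at h3
  omega

/-- Olson's theorem: if `S ⊆ ℤ/nℤ` has `|S| ≥ 3√n`, then some nonempty subset of `S`
sums to `0` in `ℤ/nℤ`. -/
theorem olson_zero_sum_subset (n : ℕ) (hn : 1 ≤ n) (S : Finset (ZMod n))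
    (hS : 3 * Real.sqrt n ≤ S.card) :
    ∃ T ⊆ S, T.Nonempty ∧ ∑ a ∈ T, a = 0 := by
  by_contra hcon
  push Not at hcon
  have : NeZero n := ⟨by omega⟩
  have hfree : OlsonFree S := hcon
  have h1 := olson_bound _ (ZMod n) (olsonInv_zmod n) S hfree rfl
  have h2 : (olsonSums S).card ≤ n := by
    have := Finset.card_le_univ (olsonSums S)
    rwa [ZMod.card] at this
  have h3 : (9 : ℝ) * n ≤ (S.card : ℝ) ^ 2 := by
    have h4 := Real.sq_sqrt (show (0 : ℝ) ≤ n by positivity)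
    have h5 := Real.sqrt_nonneg (n : ℝ)
    nlinarith
  have h4 : 9 * n ≤ S.card ^ 2 := by exact_mod_cast h3
  omega
end

section
/- Let T = k* act on k[x_1, ..., x_n, x_{-n}] with t·x_i = t^i x_i. Then the cardinality of a minimal generating set for the invariant ring k[x_1, ..., x_n, x_{-n}]^T is O(e^{6√n · log(2n)}). -/
open MvPolynomial

variable (k : Type) [Field k]

section Additive
open Finset
open scoped Pointwise

/-- The number of new elements obtained by translating `B` by `x`. -/
def lam {G : Type} [AddCommGroup G] [DecidableEq G] (B : Finset G) (x : G) : ℕ :=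
  ((B.image (fun b => b + x)) \ B).card

lemma lam_add {G : Type} [AddCommGroup G] [DecidableEq G] (B : Finset G) (x y : G) :
    lam B (x + y) ≤ lam B x + lam B y := by
  unfold lam
  have h : (B.image (fun b => b + (x + y))) \ B ⊆
      (((B.image (fun b => b + x)) \ B).image (fun b => b + y)) ∪
        ((B.image (fun b => b + y)) \ B) := by
    intro z hz
    simp only [mem_sdiff, mem_image, mem_union] at hz ⊢
    obtain ⟨⟨b, hb, rfl⟩, hz⟩ := hz
    by_cases h : b + x ∈ B
    · right
      exact ⟨⟨b + x, h, by abel⟩, hz⟩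
    · left
      exact ⟨b + x, ⟨⟨b, hb, rfl⟩, h⟩, by abel⟩
  exact (card_le_card h).trans ((card_union_le _ _).trans (Nat.add_le_add_right card_image_le _))

lemma lam_zero {G : Type} [AddCommGroup G] [DecidableEq G] (B : Finset G) : lam B 0 = 0 := by
  simp [lam]

lemma lam_neg {G : Type} [AddCommGroup G] [DecidableEq G] (B : Finset G) (x : G) :
    lam B (-x) = lam B x := by
  unfold lam
  have h1 : ((B.image (fun b => b + -x)) \ B).image (fun b => b + x) =
      B \ (B.image (fun b => b + x)) := by
    ext z
    simp only [mem_sdiff, mem_image]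
    constructor
    · rintro ⟨a, ⟨⟨b, hb, rfl⟩, h⟩, rfl⟩
      refine ⟨by simpa using hb, ?_⟩
      rintro ⟨c, hc, h'⟩
      have : c = b + -x := add_right_cancel h'
      exact h (this ▸ hc)
    · rintro ⟨hz, h⟩
      refine ⟨z + -x, ⟨⟨z, hz, rfl⟩, fun h' => h ⟨_, h', by abel⟩⟩, by abel⟩
  have hinj : Function.Injective (fun b : G => b + x) := add_left_injective x
  rw [← card_image_of_injective _ hinj, h1]
  exact card_sdiff_comm (card_image_of_injective _ hinj).symm

lemma lam_sum {G : Type} [AddCommGroup G] [DecidableEq G] (B Y : Finset G) :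
    Y.card * B.card ≤ B.card * B.card + ∑ y ∈ Y, lam B y := by
  have h1 : ∀ y ∈ Y, B.card = ((B.image (fun b => b + y)) ∩ B).card + lam B y := by
    intro y _
    unfold lam
    rw [card_inter_add_card_sdiff, card_image_of_injective _ (add_left_injective y)]
  have h2 : ∑ y ∈ Y, ((B.image (fun b => b + y)) ∩ B).card ≤ B.card * B.card := by
    rw [← card_sigma, ← card_product]
    apply card_le_card_of_injOn (fun p => (p.2 - p.1, p.2))
    · rintro ⟨y, z⟩ h
      simp only [coe_sigma, Set.mem_sigma_iff, mem_coe, mem_inter, mem_image] at h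
      obtain ⟨_, ⟨b, hb, rfl⟩, h⟩ := h
      simp [hb, h]
    · rintro ⟨y, z⟩ _ ⟨y', z'⟩ _ h
      simp only [Prod.mk.injEq] at h
      obtain ⟨h, rfl⟩ := h
      have : y = y' := by simpa using h
      subst this; rfl
  calc Y.card * B.card = ∑ y ∈ Y, B.card := by simp
    _ = ∑ y ∈ Y, (((B.image (fun b => b + y)) ∩ B).card + lam B y) := sum_congr rfl h1
    _ ≤ _ := by rw [sum_add_distrib]; gcongr

lemma lam_nsmul {G : Type} [AddCommGroup G] [DecidableEq G] (B X : Finset G) (m : ℕ)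
    (h : ∀ x ∈ X, lam B x ≤ m) (j : ℕ) : ∀ y ∈ j • X, lam B y ≤ j * m := by
  induction j with
  | zero => intro y hy; simp at hy; subst hy; simp [lam_zero]
  | succ j ih =>
    intro y hy
    rw [succ_nsmul, mem_add] at hy
    obtain ⟨a, ha, b, hb, rfl⟩ := hy
    have := lam_add B a b
    have := ih a ha
    have := h b hb
    rw [add_mul]; omega

/-- If the ball stops growing then it is everything. -/
lemma ball_univ {G : Type} [AddCommGroup G] [Fintype G] [DecidableEq G] (X : Finset G)
    (h0 : (0 : G) ∈ X) (hneg : ∀ x ∈ X, -x ∈ X) (hcl : AddSubgroup.closure (X : Set G) = ⊤)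
    (j : ℕ) (h : (j + 1) • X ⊆ j • X) : j • X = univ := by
  apply eq_univ_of_forall
  intro g
  have hg : g ∈ AddSubgroup.closure (X : Set G) := by rw [hcl]; trivial
  have key : ∀ y ∈ j • X, ∀ x ∈ X, y + x ∈ j • X := fun y hy x hx =>
    h (by rw [succ_nsmul]; exact add_mem_add hy hx)
  have h00 : (0 : G) ∈ j • X := by
    have := nsmul_mem_nsmul (n := j) h0
    simpa using this
  induction hg using AddSubgroup.closure_induction_right with
  | zero => exact h00
  | add_right x hx y hy ih => exact key x ih y hy
  | add_neg_cancel x hx y hy ih => exact key x ih _ (hneg y hy)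

lemma ball_growth {G : Type} [AddCommGroup G] [Fintype G] [DecidableEq G] (X : Finset G)
    (h0 : (0 : G) ∈ X) (hneg : ∀ x ∈ X, -x ∈ X) (hcl : AddSubgroup.closure (X : Set G) = ⊤)
    (j : ℕ) : (3 * j + 1) • X = univ ∨ (j + 1) * X.card ≤ ((3 * j + 1) • X).card := by
  have hmono : ∀ i : ℕ, i • X ⊆ (i + 1) • X := by
    intro i y hy
    rw [succ_nsmul]
    simpa using add_mem_add hy h0
  induction j with
  | zero => right; simp
  | succ j ih =>
    by_cases hu : (3 * j + 1 + 1) • X = univ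
    · left
      apply eq_univ_of_forall
      intro g
      have : g ∈ (3 * j + 1 + 1) • X := by rw [hu]; simp
      have := hmono _ (hmono _ this)
      have e : 3 * (j + 1) + 1 = 3 * j + 1 + 1 + 1 + 1 := by ring
      rw [e]; exact this
    · right
      have ih' : (j + 1) * X.card ≤ ((3 * j + 1) • X).card := by
        rcases ih with h | h
        · exfalso; apply hu
          apply eq_univ_of_forall
          intro g
          apply hmono
          rw [h]; simp
        · exact h
      have hns : ¬ (3 * j + 1 + 1 + 1) • X ⊆ (3 * j + 1 + 1) • X :=
        fun h => hu (ball_univ X h0 hneg hcl _ h)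
      obtain ⟨y, hy1, hy2⟩ := not_subset.mp hns
      have e : 3 * (j + 1) + 1 = 3 * j + 1 + 1 + 1 + 1 := by ring
      have hdis : Disjoint ((3 * j + 1) • X) (X.image (fun x => y + x)) := by
        rw [disjoint_left]
        intro z hz hz'
        obtain ⟨x, hx, rfl⟩ := mem_image.mp hz'
        apply hy2
        rw [succ_nsmul]
        have := add_mem_add hz (hneg x hx)
        simpa using this
      have hsub : ((3 * j + 1) • X) ∪ (X.image (fun x => y + x)) ⊆ (3 * (j + 1) + 1) • X := by
        rw [e]
        apply union_subset
        · exact fun z hz => hmono _ (hmono _ (hmono _ hz))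
        · intro z hz
          obtain ⟨x, hx, rfl⟩ := mem_image.mp hz
          rw [succ_nsmul]
          exact add_mem_add hy1 hx
      have := card_le_card hsub
      rw [card_union_of_disjoint hdis, card_image_of_injective _ (add_right_injective y)] at this
      linarith

/-- The zero-sum-free condition for finite sets. -/
def ZSF {G : Type} [AddCommGroup G] (S : Finset G) : Prop :=
  ∀ T ⊆ S, T.Nonempty → ∑ x ∈ T, x ≠ 0

lemma exists_lam_large {G : Type} [AddCommGroup G] [Fintype G] [DecidableEq G] (U B : Finset G)
    (hU : ZSF U) (h2 : ∀ x ∈ U, x + x ≠ 0) (hcl : AddSubgroup.closure (U : Set G) = ⊤)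
    (hne : U.Nonempty)
    (hB : 2 * B.card ≤ Fintype.card G) :
    ∃ x ∈ U, B.card * U.card ≤ 2 * (3 * B.card + U.card) * lam B x := by
  obtain ⟨x, hx, hmax⟩ := exists_max_image U (lam B) hne
  refine ⟨x, hx, ?_⟩
  set m := lam B x with hm
  set X : Finset G := insert 0 (U ∪ U.image (fun x => -x)) with hX
  have h0 : (0 : G) ∈ X := mem_insert_self _ _
  have hneg : ∀ x ∈ X, -x ∈ X := by
    intro x hx
    simp only [hX, mem_insert, mem_union, mem_image] at hx ⊢
    rcases hx with rfl | hx | ⟨y, hy, rfl⟩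
    · left; simp
    · right; right; exact ⟨x, hx, rfl⟩
    · right; left; simpa using hy
  have hclX : AddSubgroup.closure (X : Set G) = ⊤ := by
    rw [eq_top_iff, ← hcl]
    apply AddSubgroup.closure_mono
    intro y hy
    simp only [hX, coe_insert, coe_union]
    right; left; exact hy
  have hdis : Disjoint U (U.image (fun x => -x)) := by
    rw [disjoint_left]
    intro z hz hz'
    obtain ⟨y, hy, rfl⟩ := mem_image.mp hz'
    have hyne : y ≠ -y := fun h => h2 y hy (by nth_rewrite 2 [h]; simp)
    apply hU {y, -y}
    · intro w hw
      simp only [mem_insert, mem_singleton] at hw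
      rcases hw with rfl | rfl <;> assumption
    · simp
    · rw [sum_pair hyne]; simp
  have hXcard : 2 * U.card ≤ X.card := by
    have h1 : (U ∪ U.image (fun x => -x)).card ≤ X.card := card_le_card (subset_insert _ _)
    rw [card_union_of_disjoint hdis, card_image_of_injective _ neg_injective] at h1
    omega
  have hlX : ∀ y ∈ X, lam B y ≤ m := by
    intro y hy
    simp only [hX, mem_insert, mem_union, mem_image] at hy
    rcases hy with rfl | hy | ⟨z, hz, rfl⟩
    · simp [lam_zero]
    · exact hmax y hy
    · rw [lam_neg]; exact hmax z hz
  have hupos : 0 < U.card := hne.card_pos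
  set J := B.card / U.card with hJ
  have hJ1 : J * U.card ≤ B.card := Nat.div_mul_le_self _ _
  have hJ2 : B.card < (J + 1) * U.card := by
    have := Nat.lt_div_mul_add hupos (a := B.card)
    rw [← hJ] at this; linarith
  set Y := (3 * J + 1) • X with hY
  have hYc : 2 * B.card ≤ Y.card := by
    rcases ball_growth X h0 hneg hclX J with h | h
    · rw [hY, h, card_univ]; exact hB
    · nlinarith
  have hYl : ∀ y ∈ Y, lam B y ≤ (3 * J + 1) * m := lam_nsmul B X m hlX _
  have hs := lam_sum B Y
  have hs2 : ∑ y ∈ Y, lam B y ≤ Y.card * ((3 * J + 1) * m) := by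
    simpa using sum_le_card_nsmul Y _ _ hYl
  have hmain : B.card ≤ 2 * ((3 * J + 1) * m) := by
    by_contra hcon
    push Not at hcon
    set M := (3 * J + 1) * m
    have h3 : Y.card * B.card ≤ B.card * B.card + Y.card * M := by omega
    have h4 : 0 < B.card := by omega
    nlinarith
  calc B.card * U.card ≤ 2 * ((3 * J + 1) * m) * U.card := by gcongr
    _ = 2 * (3 * (J * U.card) + U.card) * m := by ring
    _ ≤ _ := by gcongr

/-- The set of subset sums. -/
def SS {G : Type} [AddCommGroup G] [DecidableEq G] (T : Finset G) : Finset G :=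
  T.powerset.image (fun A => ∑ x ∈ A, x)

lemma card_SS_insert {G : Type} [AddCommGroup G] [DecidableEq G] (T : Finset G) (x : G)
    (hx : x ∉ T) : (SS (insert x T)).card = (SS T).card + lam (SS T) x := by
  have h : SS (insert x T) = SS T ∪ ((SS T).image (fun b => b + x)) := by
    unfold SS
    rw [powerset_insert, image_union, image_image, image_image]
    congr 1
    apply image_congr
    intro A hA
    have hA' : A ⊆ T := mem_powerset.mp (mem_coe.mp hA)
    simp only [Function.comp]
    rw [sum_insert (fun h => hx (hA' h)), add_comm]
  rw [h, lam, ← union_sdiff_self_eq_union, card_union_of_disjoint disjoint_sdiff]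

lemma phase {G : Type} [AddCommGroup G] [Fintype G] [DecidableEq G] (S A : Finset G)
    (hA : A ⊆ S) (hS : ZSF S) (h2 : ∀ x ∈ S, x + x ≠ 0) (u : ℕ) (hu : 0 < u)
    (hgen : ∀ V ⊆ S, V.card = u → AddSubgroup.closure (V : Set G) = ⊤) (L δ : ℕ)
    (hδ : ∀ b m : ℕ, L ≤ b → b * u ≤ 2 * (3 * b + u) * m → δ ≤ m)
    (T : Finset G) (hT : T ⊆ A) (hL : L ≤ (SS T).card) (r : ℕ)
    (hr : T.card + r + u ≤ A.card) :
    ∃ T' ⊆ A, T'.card ≤ T.card + r ∧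
      (Fintype.card G < 2 * (SS T').card ∨ L + r * δ ≤ (SS T').card) := by
  induction r with
  | zero => exact ⟨T, hT, by simp, Or.inr (by simpa using hL)⟩
  | succ r ih =>
    obtain ⟨T', hT', hc, h⟩ := ih (by omega)
    by_cases hb : Fintype.card G < 2 * (SS T').card
    · exact ⟨T', hT', by omega, Or.inl hb⟩
    · have hb' := h.resolve_left hb
      have hcard : u ≤ (A \ T').card := by
        rw [card_sdiff_of_subset hT']; omega
      obtain ⟨V, hV, hVu⟩ := exists_subset_card_eq hcard
      have hVS : V ⊆ S := hV.trans (sdiff_subset.trans hA)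
      obtain ⟨x, hx, hlam⟩ := exists_lam_large V (SS T')
        (fun W hW hne => hS W (hW.trans hVS) hne) (fun x hx => h2 x (hVS hx)) (hgen V hVS hVu)
        (card_pos.mp (by omega)) (by omega)
      have hxA := mem_sdiff.mp (hV hx)
      refine ⟨insert x T', insert_subset hxA.1 hT', ?_, Or.inr ?_⟩
      · rw [card_insert_of_notMem hxA.2]; omega
      · rw [card_SS_insert T' x hxA.2]
        rw [hVu] at hlam
        have := hδ _ _ (by nlinarith [Nat.zero_le (r * δ)]) hlam
        rw [add_mul]; omega

lemma reach {G : Type} [AddCommGroup G] [Fintype G] [DecidableEq G] (S A : Finset G)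
    (hA : A ⊆ S) (hS : ZSF S) (h2 : ∀ x ∈ S, x + x ≠ 0) (q : ℕ) (hq : 1000000 ≤ q)
    (hgen : ∀ V ⊆ S, V.card = 5 * q → AddSubgroup.closure (V : Set G) = ⊤)
    (hAc : 6 * q ≤ A.card) :
    ∃ T ⊆ A, T.card ≤ q ∧
      (Fintype.card G < 2 * (SS T).card ∨ 74 * (q * q) ≤ 100 * (SS T).card) := by
  obtain ⟨T1, hT1, hc1, h1⟩ := phase S A hA hS h2 (5 * q) (by omega) hgen 1 1
    (by
      intro b m hb h
      by_contra hm
      have : m = 0 := by omega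
      subst this
      have : 0 < b * (5 * q) := by positivity
      omega) ∅ (empty_subset _) (by simp [SS]) 2500 (by simp; omega)
  rw [card_empty] at hc1
  rcases h1 with h1 | h1
  · exact ⟨T1, hT1, by omega, Or.inl h1⟩
  obtain ⟨T2, hT2, hc2, h3⟩ := phase S A hA hS h2 (5 * q) (by omega) hgen 2500 1200
    (by
      intro b m hb h
      by_contra hm
      have hm' : m ≤ 1199 := by omega
      have h' : b * (5 * q) ≤ 2 * (3 * b + 5 * q) * 1199 := h.trans (by gcongr)
      obtain ⟨c, rfl⟩ := Nat.exists_eq_add_of_le hb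
      obtain ⟨d, rfl⟩ := Nat.exists_eq_add_of_le hq
      nlinarith [Nat.zero_le (c * d)]) T1 hT1 (by omega) (q / 48 + 1) (by omega)
  rcases h3 with h3 | h3
  · exact ⟨T2, hT2, by omega, Or.inl h3⟩
  obtain ⟨T3, hT3, hc3, h5⟩ := phase S A hA hS h2 (5 * q) (by omega) hgen (25 * q) (78 * q / 100)
    (by
      intro b m hb h
      by_contra hm
      have hm' : 100 * m ≤ 78 * q := by omega
      have hbq : 0 < b * q := by apply Nat.mul_pos <;> omega
      have e1 : 5 * (25 * q) * m ≤ 5 * b * m := by gcongr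
      have e2 : b * (100 * m) ≤ b * (78 * q) := by gcongr
      nlinarith) T2 hT2 (by omega) (q - 2501 - q / 48) (by omega)
  refine ⟨T3, hT3, by omega, ?_⟩
  rcases h5 with h5 | h5
  · exact Or.inl h5
  · right
    have e1 : 96 * q ≤ 100 * (q - 2501 - q / 48) := by omega
    have e2 : 78 * q ≤ 100 * (78 * q / 100) + 99 := by omega
    set r := q - 2501 - q / 48
    set δ := 78 * q / 100
    have e3 : 96 * q * (100 * δ) ≤ 100 * r * (100 * δ) := by gcongr
    have e4 : 96 * q * (78 * q) ≤ 96 * q * (100 * δ + 99) := by gcongr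
    nlinarith

lemma sum_contra {G : Type} [AddCommGroup G] [Fintype G] [DecidableEq G] (S T1 T2 : Finset G)
    (hS : ZSF S) (h1 : T1 ⊆ S) (h2 : T2 ⊆ S \ T1) (x : G) (hx : x ∈ S) (hx1 : x ∉ T1)
    (hx2 : x ∉ T2) (hc1 : Fintype.card G < 2 * (SS T1).card)
    (hc2 : Fintype.card G < 2 * (SS T2).card) : False := by
  have hinj : Function.Injective (fun c : G => -x - c) := by
    intro a b h; simpa using h
  have hnd : ¬ Disjoint (SS T1) ((SS T2).image (fun c => -x - c)) := by
    intro hd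
    have := card_le_univ ((SS T1) ∪ ((SS T2).image (fun c => -x - c)))
    rw [card_union_of_disjoint hd, card_image_of_injective _ hinj] at this
    omega
  rw [not_disjoint_iff] at hnd
  obtain ⟨a, ha, ha'⟩ := hnd
  obtain ⟨c, hc, rfl⟩ := mem_image.mp ha'
  unfold SS at ha hc
  obtain ⟨A1, hA1, e1⟩ := mem_image.mp ha
  obtain ⟨A2, hA2, e2⟩ := mem_image.mp hc
  rw [mem_powerset] at hA1 hA2
  have hdis : Disjoint A1 A2 := by
    rw [disjoint_left]
    intro z hz hz'
    exact (mem_sdiff.mp (h2 (hA2 hz'))).2 (hA1 hz)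
  have hxn : x ∉ A1 ∪ A2 := by
    rw [mem_union]; rintro (h | h)
    · exact hx1 (hA1 h)
    · exact hx2 (hA2 h)
  apply hS (insert x (A1 ∪ A2))
  · apply insert_subset hx
    exact union_subset (hA1.trans h1) (hA2.trans (h2.trans sdiff_subset))
  · exact insert_nonempty _ _
  · rw [sum_insert hxn, sum_union hdis, e1, e2]; abel

lemma thmB {G : Type} [AddCommGroup G] [Fintype G] [DecidableEq G] (S : Finset G)
    (hS : ZSF S) (h2 : ∀ x ∈ S, x + x ≠ 0)
    (hK : ∀ K : AddSubgroup G, K ≠ ⊤ → ∀ V ⊆ S, (∀ x ∈ V, x ∈ K) →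
      2 * V.card ^ 2 ≤ S.card ^ 2)
    (hbig : 7000000 ≤ S.card) : S.card ^ 2 ≤ 35 * Fintype.card G := by
  by_contra hcon
  push Not at hcon
  set q := S.card / 7 with hq
  have hq1 : 7 * q ≤ S.card := by omega
  have hq2 : S.card ≤ 7 * q + 6 := by omega
  have hq3 : 1000000 ≤ q := by omega
  have hgen : ∀ V ⊆ S, V.card = 5 * q → AddSubgroup.closure (V : Set G) = ⊤ := by
    intro V hV hVc
    by_contra hne
    have h := hK _ hne V hV (fun x hx => AddSubgroup.subset_closure (mem_coe.mpr hx))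
    rw [hVc] at h
    have : S.card ^ 2 ≤ (7 * q + 6) ^ 2 := by gcongr
    nlinarith
  have hsq : S.card ^ 2 ≤ (7 * q + 6) ^ 2 := by gcongr
  obtain ⟨T1, hT1, hc1, h1⟩ := reach S S subset_rfl hS h2 q hq3 hgen (by omega)
  have hd : (S \ T1).card = S.card - T1.card := card_sdiff_of_subset hT1
  obtain ⟨T2, hT2, hc2, h3⟩ := reach S (S \ T1) sdiff_subset hS h2 q hq3 hgen (by omega)
  have hd2 : ((S \ T1) \ T2).card = (S \ T1).card - T2.card := card_sdiff_of_subset hT2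
  have hne : ((S \ T1) \ T2).Nonempty := card_pos.mp (by omega)
  obtain ⟨x, hx⟩ := hne
  simp only [mem_sdiff] at hx
  have b1 : Fintype.card G < 2 * (SS T1).card := by
    rcases h1 with h | h
    · exact h
    · nlinarith
  have b2 : Fintype.card G < 2 * (SS T2).card := by
    rcases h3 with h | h
    · exact h
    · nlinarith
  exact sum_contra S T1 T2 hS hT1 hT2 x hx.1.1 hx.1.2 hx.2 b1 b2

lemma claimA (N : ℕ) : ∀ (G : Type) [AddCommGroup G] [Fintype G], Fintype.card G = N →
    ∀ S : Finset G, ZSF S →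
    (∀ x ∈ S, ∀ d : ℕ, 0 < d → d < 10 ^ 14 → d • x ≠ 0) → S.card ^ 2 ≤ 35 * N := by
  induction N using Nat.strong_induction_on with
  | _ N ih =>
  intro G _ _ hG S hS hord
  classical
  by_contra hcon
  push Not at hcon
  have hSpos : 0 < S.card := by
    rcases Nat.eq_zero_or_pos S.card with h | h
    · rw [h] at hcon; simp at hcon
    · exact h
  obtain ⟨x, hx⟩ := card_pos.mp hSpos
  have hN : 10 ^ 14 ≤ N := by
    by_contra h
    push Not at h
    refine hord x hx N ?_ h ?_
    · rw [← hG]; exact Fintype.card_pos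
    · rw [← hG]; exact card_nsmul_eq_zero
  have hbig : 7000000 ≤ S.card := by nlinarith
  have := thmB S hS (fun y hy h => hord y hy 2 (by norm_num) (by norm_num) (by rwa [two_nsmul]))
    (by
      intro K hKne V hV hVK
      have hcardK : 2 * Fintype.card K ≤ N := by
        have h1 := K.card_mul_index
        have h2 : K.index ≠ 1 := fun h => hKne (AddSubgroup.index_eq_one.mp h)
        have h3 : K.index ≠ 0 := AddSubgroup.index_ne_zero_of_finite
        have h4 : 2 ≤ K.index := by omega
        rw [Nat.card_eq_fintype_card, Nat.card_eq_fintype_card, hG] at h1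
        rw [← h1]; nlinarith [Nat.zero_le (Fintype.card K)]
      have hKpos : 0 < Fintype.card K := Fintype.card_pos
      set V' : Finset K := V.subtype (fun x => x ∈ K) with hV'
      have hmap : V'.map (Function.Embedding.subtype _) = V := by
        rw [hV', subtype_map]; exact filter_true_of_mem hVK
      have hc : V'.card = V.card := by
        rw [← card_map (Function.Embedding.subtype (fun x => x ∈ K)), hmap]
      have h := ih (Fintype.card K) (by omega) K rfl V'
        (by
          intro T hT hne h0
          apply hS (T.map (Function.Embedding.subtype _))
          · refine (map_subset_map.mpr hT).trans ?_
            rw [hmap]; exact hV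
          · exact hne.map
          · rw [sum_map]
            have := congrArg (Subtype.val) h0
            rw [AddSubgroup.val_finsetSum] at this
            simpa using this)
        (by
          intro y hy d hd hd' h0
          have hyV : (y : G) ∈ V := by simpa [hV'] using hy
          apply hord y (hV hyV) d hd hd'
          have := congrArg (Subtype.val) h0
          simpa using this)
      rw [hc] at h
      omega) hbig
  rw [hG] at this
  omega

lemma zmod_bound (n : ℕ) [NeZero n] (S : Finset (ZMod n)) (hS : ZSF S) :
    (S.card : ℝ) ≤ 10 ^ 28 + Real.sqrt (35 * n) := by
  classical
  set E : Finset (ZMod n) := (Finset.Ico 1 (10 ^ 14)).biUnion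
    (fun d => univ.filter (fun x : ZMod n => d • x = 0)) with hE
  have hEc : E.card ≤ 10 ^ 28 := by
    calc E.card ≤ ∑ d ∈ Finset.Ico 1 (10 ^ 14), (univ.filter (fun x : ZMod n => d • x = 0)).card :=
          card_biUnion_le
      _ ≤ ∑ d ∈ Finset.Ico 1 (10 ^ 14), 10 ^ 14 := by
          apply sum_le_sum
          intro d hd
          rw [Finset.mem_Ico] at hd
          exact (IsAddCyclic.card_nsmul_eq_zero_le (by omega)).trans hd.2.le
      _ ≤ 10 ^ 28 := by
          rw [sum_const, Nat.card_Ico, smul_eq_mul]; norm_num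
  have hA := claimA n (ZMod n) (ZMod.card n) (S \ E)
    (fun T hT hne => hS T (hT.trans sdiff_subset) hne)
    (by
      intro x hx d hd hd' h0
      apply (mem_sdiff.mp hx).2
      rw [hE, mem_biUnion]
      exact ⟨d, Finset.mem_Ico.mpr ⟨hd, hd'⟩, by simp only [mem_filter, mem_univ, true_and]; exact h0⟩)
  have h1 : S.card ≤ E.card + (S \ E).card := by
    have := card_le_card_sdiff_add_card (s := S) (t := E)
    omega
  have h2 : ((S \ E).card : ℝ) ≤ Real.sqrt (35 * n) := by
    apply Real.le_sqrt_of_sq_le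
    exact_mod_cast hA
  have h3 : (S.card : ℝ) ≤ E.card + (S \ E).card := by exact_mod_cast h1
  have h4 : (E.card : ℝ) ≤ 10 ^ 28 := by exact_mod_cast hEc
  linarith

/-- Exponent vectors of indecomposable monomials in `x_1, …, x_n` modulo `n`. -/
def Atm (n : ℕ) (a : Fin n → ℕ) : Prop :=
  a ≠ 0 ∧ n ∣ ∑ i, a i * (i.val + 1) ∧
    ∀ b ≤ a, b ≠ 0 → n ∣ ∑ i, b i * (i.val + 1) → b = a

lemma atm_len (n : ℕ) (hn : 2 ≤ n) (a : Fin n → ℕ) (ha : Atm n a) : ∑ i, a i ≤ 2 * n := by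
  classical
  by_contra hcon
  push Not at hcon
  have : NeZero n := ⟨by omega⟩
  set s : Finset (Σ _ : Fin n, ℕ) := univ.sigma (fun i => range (a i)) with hs
  have hsc : s.card = ∑ i, a i := by simp [hs, card_sigma]
  obtain ⟨t, hts, htc, ht0⟩ := ZMod.erdos_ginzburg_ziv (n := n) (s := s)
    (fun p => ((p.1.val + 1 : ℕ) : ZMod n)) (by omega)
  set b : Fin n → ℕ := fun i => (t.filter (fun p => p.1 = i)).card with hb
  have hba : b ≤ a := by
    intro i
    have : t.filter (fun p => p.1 = i) ⊆ (range (a i)).image (fun j => (⟨i, j⟩ : Σ _ : Fin n, ℕ)) := by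
      rintro ⟨i', j⟩ hp
      obtain ⟨h1, h2⟩ := mem_filter.mp hp
      simp only at h2
      subst h2
      have := hts h1
      rw [hs, mem_sigma] at this
      exact mem_image.mpr ⟨j, this.2, rfl⟩
    calc b i ≤ _ := card_le_card this
      _ ≤ (range (a i)).card := card_image_le
      _ = a i := card_range _
  have hbsum : ∑ i, b i = n := by
    refine Eq.trans ?_ htc
    exact (card_eq_sum_card_fiberwise (f := fun p : (Σ _ : Fin n, ℕ) => p.1) (t := univ)
      (fun _ _ => by simp)).symm
  have hdvd : n ∣ ∑ i, b i * (i.val + 1) := by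
    rw [← ZMod.natCast_eq_zero_iff, ← ht0]
    push_cast
    rw [← sum_fiberwise_of_maps_to (s := t) (t := univ) (g := fun p => p.1) (fun _ _ => mem_univ _)]
    apply sum_congr rfl
    intro i _
    rw [sum_congr rfl (g := fun _ => ((i.val : ZMod n) + 1))]
    · simp [hb, mul_add]
    · intro p hp
      rw [(mem_filter.mp hp).2]
  have hb0 : b ≠ 0 := by
    intro h
    rw [h] at hbsum
    simp at hbsum
    omega
  have := ha.2.2 b hba hb0 hdvd
  rw [this] at hbsum
  omega

lemma atm_supp (n : ℕ) (hn : 1 ≤ n) (a : Fin n → ℕ) (ha : Atm n a) :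
    ((univ.filter (fun i => a i ≠ 0)).card : ℝ) ≤ 10 ^ 28 + 1 + Real.sqrt (35 * n) := by
  classical
  have : NeZero n := ⟨by omega⟩
  obtain ⟨i0, hi0⟩ : ∃ i, a i ≠ 0 := by
    by_contra h
    push Not at h
    exact ha.1 (funext h)
  have hinj : Function.Injective (fun i : Fin n => ((i.val + 1 : ℕ) : ZMod n)) := by
    intro i j h
    simp only at h
    rw [ZMod.natCast_eq_natCast_iff] at h
    have h' := Nat.ModEq.add_right_cancel' 1 h
    exact Fin.ext (Nat.ModEq.eq_of_lt_of_lt h' i.isLt j.isLt)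
  set W := univ.filter (fun i => a i ≠ 0) with hW
  have hZ : ZSF ((W.erase i0).image (fun i : Fin n => ((i.val + 1 : ℕ) : ZMod n))) := by
    intro T hT hne h0
    obtain ⟨V, hV, rfl⟩ := subset_image_iff.mp hT
    rw [sum_image (fun _ _ _ _ h => hinj h)] at h0
    set b : Fin n → ℕ := fun i => if i ∈ V then 1 else 0 with hb
    have hV' : V ⊆ W.erase i0 := by exact_mod_cast hV
    have h1 : b ≤ a := by
      intro i
      by_cases hi : i ∈ V
      · have := (mem_filter.mp (mem_of_mem_erase (hV' hi))).2
        simp only [hb, hi, if_true]; omega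
      · simp [hb, hi]
    have hbi0 : b i0 = 0 := by
      simp only [hb]
      rw [if_neg]
      exact fun h => (mem_erase.mp (hV' h)).1 rfl
    have hb0 : b ≠ 0 := by
      obtain ⟨v, hv⟩ := (image_nonempty.mp hne)
      intro h
      have := congrFun h v
      simp [hb, hv] at this
    have := ha.2.2 b h1 hb0 (by
      rw [← ZMod.natCast_eq_zero_iff, ← h0, Nat.cast_sum]
      simp [hb])
    rw [this] at hbi0
    exact hi0 hbi0
  have h := zmod_bound n _ hZ
  rw [card_image_of_injective _ hinj] at h
  have hc : W.card = (W.erase i0).card + 1 := by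
    rw [card_erase_add_one]
    simp [hW, hi0]
  rw [hc]; push_cast; linarith

lemma geom_aux (r : ℝ) (hr : 0 < r) (M : ℕ) :
    ∑ j ∈ range M, (r / (r + 1)) ^ (j + 1) = r * (1 - (r / (r + 1)) ^ M) := by
  induction M with
  | zero => simp
  | succ M ih =>
    rw [sum_range_succ, ih, pow_succ]
    field_simp
    ring

lemma count_bound (n : ℕ) (hn : 1 ≤ n) (A : Finset (Fin n → ℕ)) (s : ℝ)
    (h1 : ∀ a ∈ A, ∑ i, a i ≤ 2 * n)
    (h2 : ∀ a ∈ A, ((univ.filter (fun i => a i ≠ 0)).card : ℝ) ≤ s) :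
    (A.card : ℝ) ≤ (n : ℝ) ^ s * Real.exp (3 * Real.sqrt n) := by
  classical
  have hn0 : (0 : ℝ) < n := by exact_mod_cast hn
  have hn1 : (1 : ℝ) ≤ n := by exact_mod_cast hn
  set r := Real.sqrt n with hr
  have hrpos : 0 < r := Real.sqrt_pos.mpr hn0
  have hrr : r * r = n := Real.mul_self_sqrt hn0.le
  set x := r / (r + 1) with hx
  have hxpos : 0 < x := by positivity
  have hx1 : x ≤ 1 := by rw [hx, div_le_one (by positivity)]; linarith
  set f : ℕ → ℝ := fun j => if j = 0 then 1 else (n : ℝ)⁻¹ * x ^ j with hf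
  have hfnn : ∀ j, 0 ≤ f j := by
    intro j; simp only [hf]; split_ifs <;> positivity
  have hprod : ∀ a : Fin n → ℕ, ∏ i, f (a i) =
      ((n : ℝ)⁻¹) ^ (univ.filter (fun i => a i ≠ 0)).card * x ^ (∑ i, a i) := by
    intro a
    have : ∀ i, f (a i) = (if a i ≠ 0 then (n : ℝ)⁻¹ else 1) * x ^ (a i) := by
      intro i
      simp only [hf]
      by_cases h : a i = 0 <;> simp [h]
    simp only [this]
    rw [prod_mul_distrib, prod_pow_eq_pow_sum, ← prod_filter, prod_const]
  have hlow : ∀ a ∈ A, ((n : ℝ) ^ s)⁻¹ * x ^ (2 * n) ≤ ∏ i, f (a i) := by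
    intro a ha
    rw [hprod, inv_pow]
    have e1 : (n : ℝ) ^ (univ.filter (fun i => a i ≠ 0)).card ≤ (n : ℝ) ^ s := by
      rw [← Real.rpow_natCast]
      exact Real.rpow_le_rpow_of_exponent_le hn1 (h2 a ha)
    have e2 : x ^ (2 * n) ≤ x ^ (∑ i, a i) := pow_le_pow_of_le_one hxpos.le hx1 (h1 a ha)
    gcongr
  have hfs : ∑ j ∈ range (2 * n + 1), f j ≤ 1 + r / n := by
    rw [sum_range_succ']
    have : ∑ j ∈ range (2 * n), f (j + 1) = (n : ℝ)⁻¹ * (r * (1 - x ^ (2 * n))) := by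
      rw [hx, ← geom_aux r hrpos, mul_sum]
      apply sum_congr rfl
      intro j _
      simp [hf, hx]
    rw [this]
    have h0 : f 0 = 1 := by simp [hf]
    have hp : 0 ≤ x ^ (2 * n) := by positivity
    have : (n : ℝ)⁻¹ * (r * (1 - x ^ (2 * n))) ≤ (n : ℝ)⁻¹ * (r * 1) := by
      gcongr; linarith
    rw [h0, div_eq_inv_mul]; linarith
  have hup : ∑ a ∈ A, ∏ i, f (a i) ≤ Real.exp r := by
    calc ∑ a ∈ A, ∏ i, f (a i)
        ≤ ∑ a ∈ Fintype.piFinset (fun _ : Fin n => range (2 * n + 1)), ∏ i, f (a i) := by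
          apply sum_le_sum_of_subset_of_nonneg
          · intro a ha
            rw [Fintype.mem_piFinset]
            intro i
            have := single_le_sum (f := a) (fun _ _ => Nat.zero_le _) (mem_univ i)
            have := h1 a ha
            rw [Finset.mem_range]; omega
          · intro a _ _
            exact prod_nonneg (fun i _ => hfnn _)
      _ = ∏ _i : Fin n, ∑ j ∈ range (2 * n + 1), f j := by
          rw [prod_univ_sum]
      _ = (∑ j ∈ range (2 * n + 1), f j) ^ n := by simp
      _ ≤ (1 + r / n) ^ n := by
          apply pow_le_pow_left₀ (sum_nonneg (fun j _ => hfnn j)) hfs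
      _ ≤ (Real.exp (r / n)) ^ n := by
          apply pow_le_pow_left₀ (by positivity)
          linarith [Real.add_one_le_exp (r / n)]
      _ = Real.exp r := by
          rw [← Real.exp_nat_mul]; congr 1; field_simp
  have hxinv : (x ^ (2 * n))⁻¹ ≤ Real.exp (2 * r) := by
    rw [← inv_pow]
    have : x⁻¹ ≤ Real.exp (1 / r) := by
      have : x⁻¹ = 1 / r + 1 := by rw [hx]; field_simp; ring
      rw [this]; exact Real.add_one_le_exp _
    calc (x⁻¹) ^ (2 * n) ≤ (Real.exp (1 / r)) ^ (2 * n) := by gcongr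
      _ = Real.exp (2 * r) := by
        rw [← Real.exp_nat_mul]; congr 1; push_cast; rw [← hrr]; field_simp
  have hsum : (A.card : ℝ) * (((n : ℝ) ^ s)⁻¹ * x ^ (2 * n)) ≤ Real.exp r := by
    refine le_trans ?_ hup
    rw [← nsmul_eq_mul]
    exact card_nsmul_le_sum A _ _ hlow
  have hns : 0 < (n : ℝ) ^ s := Real.rpow_pos_of_pos hn0 s
  have hxp : 0 < x ^ (2 * n) := by positivity
  calc (A.card : ℝ) = ((A.card : ℝ) * (((n : ℝ) ^ s)⁻¹ * x ^ (2 * n))) *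
        ((n : ℝ) ^ s * (x ^ (2 * n))⁻¹) := by field_simp
    _ ≤ Real.exp r * ((n : ℝ) ^ s * Real.exp (2 * r)) := by gcongr
    _ = (n : ℝ) ^ s * Real.exp (3 * r) := by
      have : 3 * r = r + 2 * r := by ring
      rw [this, Real.exp_add]; ring

lemma atm_count (n : ℕ) (hn : 10 ^ 64 ≤ n) (A : Finset (Fin n → ℕ)) (hA : ∀ a ∈ A, Atm n a) :
    (A.card : ℝ) ≤ Real.exp (6 * Real.sqrt n * Real.log (2 * n)) := by
  have hn1 : 1 ≤ n := le_trans (by norm_num) hn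
  have hn2 : 2 ≤ n := le_trans (by norm_num) hn
  have hn0 : (0 : ℝ) < n := by exact_mod_cast hn1
  have hr : (10 : ℝ) ^ 32 ≤ Real.sqrt n := by
    apply Real.le_sqrt_of_sq_le
    have : ((10 ^ 64 : ℕ) : ℝ) ≤ n := by exact_mod_cast hn
    push_cast at this
    linarith
  have hs : (10 : ℝ) ^ 28 + 1 + Real.sqrt (35 * n) ≤ 6 * Real.sqrt n := by
    rw [Real.sqrt_mul (by norm_num)]
    have : Real.sqrt 35 ≤ 5.95 := by
      rw [Real.sqrt_le_left (by norm_num)]; norm_num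
    nlinarith
  have h := count_bound n hn1 A (6 * Real.sqrt n) (fun a ha => atm_len n hn2 a (hA a ha))
    (fun a ha => (atm_supp n hn1 a (hA a ha)).trans hs)
  refine h.trans ?_
  rw [Real.rpow_def_of_pos hn0, ← Real.exp_add, Real.exp_le_exp,
    Real.log_mul (by norm_num) hn0.ne']
  have := Real.log_two_gt_d9
  have h0 : 0 ≤ Real.sqrt n := Real.sqrt_nonneg _
  nlinarith
end Additive

section Invariants
open Finset

/-- The weight of an exponent vector. -/
def wtZ {ι : Type} [Fintype ι] (w : ι → ℤ) (m : ι →₀ ℕ) : ℤ := ∑ i, w i * (m i : ℤ)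

lemma zpow_sum_aux {M ι : Type} [CommGroup M] (t : M) (s : Finset ι) (f : ι → ℤ) :
    t ^ (∑ i ∈ s, f i) = ∏ i ∈ s, t ^ f i := by
  classical
  induction s using Finset.induction_on with
  | empty => simp
  | insert a s ha ih => rw [sum_insert ha, prod_insert ha, zpow_add, ih]

lemma coeff_torusAct {ι : Type} [Fintype ι] (w : ι → ℤ) (t : kˣ) (p : MvPolynomial ι k)
    (m : ι →₀ ℕ) :
    coeff m (torusAct k w t p) = ((t ^ wtZ w m : kˣ) : k) * coeff m p := by
  classical
  induction p using MvPolynomial.induction_on' with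
  | monomial u a =>
    have h : torusAct k w t (monomial u a) = monomial u (((t ^ wtZ w u : kˣ) : k) * a) := by
      unfold torusAct
      rw [aeval_monomial, Finsupp.prod_fintype _ _ (by simp)]
      simp only [smul_eq_C_mul, mul_pow]
      rw [prod_mul_distrib]
      simp only [← map_pow]
      rw [← map_prod]
      rw [monomial_eq, Finsupp.prod_fintype _ _ (by simp), algebraMap_eq, ← mul_assoc, ← C_mul]
      congr 2
      rw [mul_comm]
      congr 1
      unfold wtZ
      rw [zpow_sum_aux]
      push_cast
      apply prod_congr rfl
      intro i _
      rw [zpow_mul, zpow_natCast]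
    rw [h, coeff_monomial, coeff_monomial]
    split_ifs with hum
    · rw [hum]
    · simp
  | add p q hp hq => rw [map_add, coeff_add, coeff_add, hp, hq, mul_add]

lemma exists_zpow_ne_one [IsAlgClosed k] (d : ℤ) (hd : d ≠ 0) : ∃ t : kˣ, t ^ d ≠ 1 := by
  classical
  have : Infinite k := IsAlgClosed.instInfinite
  obtain ⟨c, hc⟩ := Infinite.exists_notMem_finset ({0, 1} : Finset k)
  simp only [mem_insert, mem_singleton, not_or] at hc
  have hpos : 0 < d.natAbs := Int.natAbs_pos.mpr hd
  obtain ⟨z, hz⟩ := IsAlgClosed.exists_pow_nat_eq c hpos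
  have hz0 : z ≠ 0 := by
    rintro rfl
    rw [zero_pow hpos.ne'] at hz
    exact hc.1 hz.symm
  refine ⟨Units.mk0 z hz0, fun h => ?_⟩
  rw [← pow_natAbs_eq_one] at h
  have := congrArg (Units.val) h
  simp only [Units.val_pow_eq_pow_val, Units.val_mk0, Units.val_one] at this
  exact hc.2 (hz.symm.trans this)

lemma mem_torusInv_iff_s15 [IsAlgClosed k] {ι : Type} [Fintype ι] (w : ι → ℤ)
    (p : MvPolynomial ι k) :
    p ∈ torusInv k w ↔ ∀ m, coeff m p ≠ 0 → wtZ w m = 0 := by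
  constructor
  · intro hp m hm
    by_contra hw
    obtain ⟨t, ht⟩ := exists_zpow_ne_one k _ hw
    have h : torusAct k w t p = p := hp t
    have h2 := coeff_torusAct k w t p m
    rw [h] at h2
    apply ht
    apply Units.ext
    rw [Units.val_one]
    exact mul_right_cancel₀ hm (by rw [← h2, one_mul])
  · intro h t
    ext m
    rw [coeff_torusAct]
    by_cases hm : coeff m p = 0
    · simp [hm]
    · rw [h m hm]; simp

/-- The exponent vector of weight zero determined by the exponents of `x_1, …, x_n`. -/
noncomputable def expVec (n : ℕ) (a : Fin n → ℕ) : Option (Fin n) →₀ ℕ :=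
  Finsupp.equivFunOnFinite.symm
    (fun o => Option.elim o ((∑ i, a i * (i.val + 1)) / n) a)

lemma wtZ_wOpt (n : ℕ) (m : Option (Fin n) →₀ ℕ) :
    wtZ (wOpt n) m = ((∑ i, m (some i) * (i.val + 1) : ℕ) : ℤ) - ((n * m none : ℕ) : ℤ) := by
  unfold wtZ
  rw [Fintype.sum_option]
  simp only [wOpt, Option.elim]
  push_cast
  rw [neg_mul, neg_add_eq_sub]
  congr 1
  exact sum_congr rfl (fun i _ => mul_comm _ _)

lemma wt_zero_iff (n : ℕ) (m : Option (Fin n) →₀ ℕ) :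
    wtZ (wOpt n) m = 0 ↔ ∑ i, m (some i) * (i.val + 1) = n * m none := by
  rw [wtZ_wOpt, sub_eq_zero]
  norm_cast

lemma eq_expVec (n : ℕ) (hn : 1 ≤ n) (m : Option (Fin n) →₀ ℕ) (h : wtZ (wOpt n) m = 0) :
    m = expVec n (fun i => m (some i)) := by
  rw [wt_zero_iff] at h
  ext o
  cases o with
  | none =>
    simp only [expVec, Finsupp.equivFunOnFinite_symm_apply_apply, Option.elim]
    rw [h, Nat.mul_div_cancel_left _ hn]
  | some i => simp [expVec]

lemma wt_expVec (n : ℕ) (a : Fin n → ℕ) (h : n ∣ ∑ i, a i * (i.val + 1)) :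
    wtZ (wOpt n) (expVec n a) = 0 := by
  rw [wt_zero_iff]
  simp only [expVec, Finsupp.equivFunOnFinite_symm_apply_apply, Option.elim]
  exact (Nat.mul_div_cancel' h).symm

lemma expVec_add (n : ℕ) (a b : Fin n → ℕ) (hb : n ∣ ∑ i, b i * (i.val + 1)) :
    expVec n (a + b) = expVec n a + expVec n b := by
  ext o
  cases o with
  | none =>
    simp only [expVec, Finsupp.equivFunOnFinite_symm_apply_apply, Option.elim, Finsupp.add_apply,
      Pi.add_apply, add_mul, sum_add_distrib]
    exact Nat.add_div_of_dvd_left hb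
  | some i => simp [expVec]

lemma monomial_mem (n : ℕ) (G : Set (MvPolynomial (Option (Fin n)) k))
    (hG : ∀ a, Atm n a → monomial (expVec n a) (1 : k) ∈ G) (N : ℕ) :
    ∀ a : Fin n → ℕ, ∑ i, a i = N → n ∣ ∑ i, a i * (i.val + 1) →
      monomial (expVec n a) (1 : k) ∈ Algebra.adjoin k G := by
  induction N using Nat.strong_induction_on with
  | _ N ih =>
  intro a hN hdvd
  by_cases h0 : a = 0
  · have : expVec n a = 0 := by
      subst h0
      ext o
      cases o <;> simp [expVec]
    rw [this]
    exact one_mem _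
  by_cases hat : Atm n a
  · exact Algebra.subset_adjoin (hG a hat)
  have hpos : ∀ c : Fin n → ℕ, c ≠ 0 → 0 < ∑ i, c i := by
    intro c hc
    rw [Nat.pos_iff_ne_zero]
    intro h
    apply hc
    funext i
    exact (sum_eq_zero_iff.mp h) i (mem_univ i)
  have hex : ∃ b ≤ a, b ≠ 0 ∧ n ∣ ∑ i, b i * (i.val + 1) ∧ b ≠ a := by
    by_contra hcon
    push Not at hcon
    exact hat ⟨h0, hdvd, hcon⟩
  obtain ⟨b, hba, hb0, hbd, hbne⟩ := hex
  set c := a - b with hc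
  have hcb : c + b = a := tsub_add_cancel_of_le hba
  have hc0 : c ≠ 0 := by
    intro h
    rw [h, zero_add] at hcb
    exact hbne hcb
  have hcd : n ∣ ∑ i, c i * (i.val + 1) := by
    rw [← hcb] at hdvd
    simp only [Pi.add_apply, add_mul, sum_add_distrib] at hdvd
    exact (Nat.dvd_add_left hbd).mp hdvd
  have hsum : ∑ i, c i + ∑ i, b i = N := by
    rw [← hN, ← hcb]; simp [sum_add_distrib]
  have h1 := hpos b hb0
  have h2 := hpos c hc0
  have hm1 := ih _ (by omega) b rfl hbd
  have hm2 := ih _ (by omega) c rfl hcd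
  have : monomial (expVec n a) (1 : k) = monomial (expVec n c) 1 * monomial (expVec n b) 1 := by
    rw [monomial_mul, ← expVec_add n c b hbd, hcb, one_mul]
  rw [this]
  exact mul_mem hm2 hm1

lemma adjoin_eq [IsAlgClosed k] (n : ℕ) (hn : 1 ≤ n)
    (A : Finset (Fin n → ℕ)) (hA : ∀ a, a ∈ A ↔ Atm n a)
    (G : Set (MvPolynomial (Option (Fin n)) k))
    (hG : G = (fun a => monomial (expVec n a) (1 : k)) '' (A : Set (Fin n → ℕ))) :
    Algebra.adjoin k G = torusInv k (wOpt n) := by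
  classical
  apply le_antisymm
  · rw [Algebra.adjoin_le_iff, hG]
    rintro _ ⟨a, ha, rfl⟩
    have ha' := (hA a).mp (mem_coe.mp ha)
    change _ ∈ torusInv k (wOpt n)
    rw [mem_torusInv_iff_s15]
    intro m hm
    rw [coeff_monomial] at hm
    have : expVec n a = m := by
      by_contra h
      simp [h] at hm
    rw [← this]
    exact wt_expVec n a ha'.2.1
  · intro p hp
    rw [mem_torusInv_iff_s15] at hp
    rw [p.as_sum]
    apply sum_mem
    intro m hm
    have hw := hp m (mem_support_iff.mp hm)
    have e := eq_expVec n hn m hw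
    have hd : n ∣ ∑ i, m (some i) * (i.val + 1) := by
      rw [(wt_zero_iff n m).mp hw]; exact dvd_mul_right _ _
    have hmem := monomial_mem k n G (fun a ha => by
      rw [hG]; exact ⟨a, mem_coe.mpr ((hA a).mpr ha), rfl⟩) _ (fun i => m (some i)) rfl hd
    rw [← e] at hmem
    have : monomial m (coeff m p) = coeff m p • monomial m (1 : k) := by
      rw [smul_monomial, smul_eq_mul, mul_one]
    rw [this]
    exact Subalgebra.smul_mem _ hmem _

lemma minGens_large [IsAlgClosed k] (n : ℕ) (hn : 10 ^ 64 ≤ n) :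
    (minGens k (torusInv k (wOpt n)) : ℝ) ≤
      Real.exp (6 * Real.sqrt n * Real.log (2 * n)) := by
  classical
  have hn1 : 1 ≤ n := le_trans (by norm_num) hn
  have hn2 : 2 ≤ n := le_trans (by norm_num) hn
  set A : Finset (Fin n → ℕ) :=
    (Fintype.piFinset (fun _ : Fin n => range (2 * n + 1))).filter (Atm n) with hAdef
  have hA : ∀ a, a ∈ A ↔ Atm n a := by
    intro a
    rw [hAdef, mem_filter]
    refine ⟨fun h => h.2, fun h => ⟨?_, h⟩⟩
    rw [Fintype.mem_piFinset]
    intro i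
    have := single_le_sum (f := a) (fun _ _ => Nat.zero_le _) (mem_univ i)
    have := atm_len n hn2 a h
    rw [Finset.mem_range]; omega
  refine le_trans ?_ (atm_count n hn A (fun a ha => (hA a).mp ha))
  have h1 : minGens k (torusInv k (wOpt n)) ≤
      (A.image (fun a => monomial (expVec n a) (1 : k))).card := by
    apply Nat.sInf_le
    exact ⟨_, rfl, adjoin_eq k n hn1 A hA _ (by rw [coe_image])⟩
  exact_mod_cast h1.trans card_image_le
end Invariants

/-- Let `T = k*` act on `k[x_1, …, x_n, x_{-n}]` with `t · x_i = t^i x_i`.  Then the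
cardinality of a minimal generating set of the invariant ring `k[x_1,…,x_n,x_{-n}]^T`
is `O(e^{6√n · log(2n)})`. -/
theorem torus_invariants_minGens_bound [IsAlgClosed k] :
    ∃ C : ℝ, ∀ n : ℕ, 1 ≤ n →
      (minGens k (torusInv k (wOpt n)) : ℝ) ≤
        C * Real.exp (6 * Real.sqrt n * Real.log (2 * n)) := by
  obtain ⟨N, hN⟩ : ∃ N : ℕ, ∀ n : ℕ, N ≤ n → (minGens k (torusInv k (wOpt n)) : ℝ) ≤
      Real.exp (6 * Real.sqrt n * Real.log (2 * n)) := ⟨10 ^ 64, minGens_large k⟩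
  refine ⟨1 + ∑ n ∈ Finset.range N, (minGens k (torusInv k (wOpt n)) : ℝ), ?_⟩
  intro n hn
  have hsum : 0 ≤ ∑ n ∈ Finset.range N, (minGens k (torusInv k (wOpt n)) : ℝ) :=
    Finset.sum_nonneg (fun _ _ => Nat.cast_nonneg _)
  have hn' : (1 : ℝ) ≤ n := by exact_mod_cast hn
  have hexp : 1 ≤ Real.exp (6 * Real.sqrt n * Real.log (2 * n)) := by
    apply Real.one_le_exp
    have : 0 ≤ Real.log (2 * n) := Real.log_nonneg (by linarith)
    positivity
  by_cases hbig : N ≤ n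
  · have := hN n hbig
    nlinarith
  · have hmem : n ∈ Finset.range N := Finset.mem_range.mpr (not_le.mp hbig)
    have := Finset.single_le_sum
      (f := fun n => (minGens k (torusInv k (wOpt n)) : ℝ)) (fun _ _ => Nat.cast_nonneg _) hmem
    nlinarith
end
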